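/- There exists a bounded domain U in ℂ^m which is biholomorphic to the open unit ball of ℂ^m, a holomorphic map F : U → ℂ^m, and a sequence {p_n}_{n=0}^∞ ⊂ U with F(p_n) = p_{n+1} for all n, such that {p_n} is dense in U. -/

import Mathlib

/-!
*Dynamics.* Let `tile m` be the product of `m` copies of the rectangle with vertices `± i`,
`√2 ± i`. In each coordinate the affine map `z ↦ i (√2 z - 1)` expands the rectangle by the factor
`√2` to a rectangle that consists of the original one, its negative and a segment between them.
Changing signs where necessary, one gets an expanding, piecewise affine self-map `tileMap` of the
tile. As squaring is injective on `0 < re z` and does not see the sign, the holomorphic map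
`w ↦ (i (√2 √w - 1))²` on `sqMap '' tile m` is conjugate to it. If `V` is open and dense in the
tile, then by Baire's theorem some orbit of `tileMap` stays in `V` and is dense. It remains to find
a `V` that is biholomorphic to the ball; the domain sought is then `sqMap '' V`.

*Dimension at least two.* Every nonempty open convex set contains a dense open set biholomorphic
to the ball: a small ball is stretched towards the successive points of a countable dense set, with
rapidly decreasing changes on an exhaustion by smaller balls, so that the limit is again
biholomorphic. One stretching is a composition of shears `w ↦ w + χ (l w) v`, where `l v = 0` and
`χ` is a polynomial in a fractional linear function of `l w`, close to a peak function; each shear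
pulls a thin finger out of the set along a segment. The segments form a tree, in which each new
segment lies in a complex hyperplane missing the earlier part, as a generic one does. The pole of
`χ` is a complex hyperplane too, and its removal does not disconnect a domain; hence the stretched
ball still has a connected neighbourhood with dense image in the convex set (`IsTame`), where the
next stretching can be performed.

*Dimension one.* Here a stretching adds a thin logarithmic finger to a map `g` of the disc with
`0 < re g'`, in the direction `u` at a boundary point `u` for which the target point minus `g u` is
a positive multiple of `u`. Such a `u` exists by a winding number argument, and the finger preserves
`0 < re g'`, hence injectivity.
-/

open Metric
open Set Filter Topology

/-! ### Holomorphic maps between Banach spaces -/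

section Holomorphic

variable {E F : Type*} [NormedAddCommGroup E] [NormedSpace ℂ E] [NormedAddCommGroup F]
  [NormedSpace ℂ F]

lemma norm_fderiv_le_of_forall_mem_ball {f : E → F} {x : E} {R M : ℝ} (hR : 0 < R)
    (hf : DifferentiableOn ℂ f (ball x R)) (hM : ∀ z ∈ ball x R, ‖f z‖ ≤ M) :
    ‖fderiv ℂ f x‖ ≤ 2 * M / R := by
  refine Complex.norm_fderiv_le_div_of_mapsTo_ball hf (fun z hz => ?_) hR
  rw [mem_closedBall, dist_eq_norm]
  linarith [norm_sub_le (f z) (f x), hM z hz, hM x (mem_ball_self hR)]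

lemma exists_ball_norm_sub_le_of_differentiableOn {f : E → F} {s : Set E} (hs : IsOpen s)
    (hf : DifferentiableOn ℂ f s) {x : E} (hx : x ∈ s) :
    ∃ C : ℝ, ∃ R > 0, ball x R ⊆ s ∧ ∀ y ∈ ball x R, ∀ z ∈ ball x R, ‖f z - f y‖ ≤ C * ‖z - y‖ := by
  obtain ⟨R, hR, hball⟩ := Metric.mem_nhds_iff.1 (inter_mem (hs.mem_nhds hx)
    ((hf.differentiableAt (hs.mem_nhds hx)).continuousAt.norm.eventually
      (gt_mem_nhds (lt_add_one ‖f x‖))))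
  have hsub : ∀ y ∈ ball x (R / 2), ball y (R / 2) ⊆ ball x R := fun y hy =>
    ball_subset_ball' (by rw [mem_ball] at hy; linarith)
  refine ⟨2 * (‖f x‖ + 1) / (R / 2), R / 2, half_pos hR,
    (ball_subset_ball (by linarith)).trans (hball.trans inter_subset_left), fun y hy z hz => ?_⟩
  refine Convex.norm_image_sub_le_of_norm_fderiv_le (𝕜 := ℂ) (fun w hw => ?_) (fun w hw => ?_)
    (convex_ball x (R / 2)) hy hz
  · exact hf.differentiableAt (hs.mem_nhds (hball (hsub w hw (mem_ball_self (half_pos hR)))).1)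
  · exact norm_fderiv_le_of_forall_mem_ball (half_pos hR)
      (hf.mono fun v hv => (hball (hsub w hw hv)).1) fun v hv => (hball (hsub w hw hv)).2.le

/-- Cauchy's estimate for `z ↦ f (z + h) - f z`, which is small because `f` is locally Lipschitz,
shows that `fderiv ℂ f` is continuous. -/
lemma hasStrictFDerivAt_of_differentiableOn {f : E → F} {s : Set E} (hs : IsOpen s)
    (hf : DifferentiableOn ℂ f s) {x : E} (hx : x ∈ s) :
    HasStrictFDerivAt f (fderiv ℂ f x) x := by
  have hd : ∀ y ∈ s, DifferentiableAt ℂ f y := fun y hy => hf.differentiableAt (hs.mem_nhds hy)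
  refine hasStrictFDerivAt_of_hasFDerivAt_of_continuousAt (f' := fderiv ℂ f) ?_ ?_
  · filter_upwards [hs.mem_nhds hx] with y hy using (hd y hy).hasFDerivAt
  obtain ⟨C, R, hR, hRs, hC⟩ := exists_ball_norm_sub_le_of_differentiableOn hs hf hx
  have hshift : ∀ y ∈ ball x (R / 2), ∀ z ∈ ball x (R / 2), z + (y - x) ∈ ball x R := by
    intro y hy z hz
    rw [mem_ball, dist_eq_norm] at *
    calc ‖z + (y - x) - x‖ = ‖(z - x) + (y - x)‖ := by congr 1; abel
      _ ≤ ‖z - x‖ + ‖y - x‖ := norm_add_le _ _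
      _ < R := by linarith
  have hx2 : x ∈ ball x (R / 2) := mem_ball_self (half_pos hR)
  have hle : ball x (R / 2) ⊆ ball x R := ball_subset_ball (by linarith)
  refine continuousAt_of_locally_lipschitz (half_pos hR) (2 * C / (R / 2)) fun y hy => ?_
  have hfd : ∀ z ∈ ball x (R / 2), DifferentiableAt ℂ (fun z => f (z + (y - x))) z := fun z hz =>
    (hd _ (hRs (hshift y hy z hz))).comp z (by fun_prop)
  have hCauchy := norm_fderiv_le_of_forall_mem_ball (f := fun z => f (z + (y - x)) - f z) (x := x)
    (R := R / 2) (M := C * ‖y - x‖) (half_pos hR)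
    (fun z hz => ((hfd z hz).sub (hd z (hRs (hle hz)))).differentiableWithinAt)
    fun z hz => by simpa using hC z (hle hz) _ (hshift y hy z hz)
  rw [fderiv_fun_sub (hfd x hx2) (hd x hx), fderiv_comp_add_right, add_sub_cancel] at hCauchy
  rw [dist_eq_norm, dist_eq_norm]
  exact hCauchy.trans_eq (by ring)

lemma uniformCauchySeqOn_fderiv {f : ℕ → E → F} {s t : Set E} {δ : ℝ} (hδ : 0 < δ)
    (hf : ∀ n, DifferentiableOn ℂ (f n) s) (hst : ∀ y ∈ t, ball y δ ⊆ s)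
    (h : UniformCauchySeqOn f atTop s) : UniformCauchySeqOn (fun n => fderiv ℂ (f n)) atTop t := by
  rw [Metric.uniformCauchySeqOn_iff] at h ⊢
  intro ε hε
  obtain ⟨N, hN⟩ := h (ε * δ / 4) (by positivity)
  refine ⟨N, fun a ha b hb y hy => ?_⟩
  have hd : ∀ n, DifferentiableAt ℂ (f n) y := fun n =>
    (hf n).differentiableAt (mem_of_superset (ball_mem_nhds y hδ) (hst y hy))
  rw [dist_eq_norm, ← fderiv_sub (hd a) (hd b)]
  have hCauchy := norm_fderiv_le_of_forall_mem_ball hδ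
    (((hf a).sub (hf b)).mono (hst y hy)) fun z hz => by
      simpa only [Pi.sub_apply, ← dist_eq_norm] using (hN a ha b hb z (hst y hy hz)).le
  refine hCauchy.trans_lt ?_
  rw [show 2 * (ε * δ / 4) / δ = ε / 2 by field_simp; ring]
  exact half_lt_self hε

lemma differentiableOn_of_tendstoUniformlyOn [CompleteSpace F] {s : Set E} (hs : IsOpen s)
    {f : ℕ → E → F} {g : E → F} (hf : ∀ n, DifferentiableOn ℂ (f n) s)
    (h : TendstoUniformlyOn f g atTop s) : DifferentiableOn ℂ g s := by
  intro x hx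
  obtain ⟨δ, hδ, hball⟩ := Metric.isOpen_iff.1 hs x hx
  have hsub : ∀ y ∈ ball x (δ / 2), ball y (δ / 2) ⊆ s := fun y hy =>
    (ball_subset_ball' (by rw [mem_ball] at hy; linarith)).trans hball
  have hys : ∀ y ∈ ball x (δ / 2), y ∈ s := fun y hy => hsub y hy (mem_ball_self (half_pos hδ))
  have hC := uniformCauchySeqOn_fderiv (half_pos hδ) hf hsub h.uniformCauchySeqOn
  have hlim : ∀ y ∈ ball x (δ / 2), ∃ L, Tendsto (fun n => fderiv ℂ (f n) y) atTop (𝓝 L) :=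
    fun y hy => cauchySeq_tendsto_of_complete (hC.cauchy_map hy)
  choose! g' hg' using hlim
  exact (hasFDerivAt_of_tendstoUniformlyOn isOpen_ball (hC.tendstoUniformlyOn_of_tendsto hg')
    (fun n y hy => ((hf n).differentiableAt (hs.mem_nhds (hys y hy))).hasFDerivAt)
    (fun y hy => h.tendsto_at (hys y hy))
    (mem_ball_self (half_pos hδ))).differentiableAt.differentiableWithinAt

end Holomorphic

/-! ### Biholomorphic maps -/

section Biholomorphic

variable {E F G : Type*} [NormedAddCommGroup E] [NormedSpace ℂ E] [NormedAddCommGroup F]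
  [NormedSpace ℂ F] [NormedAddCommGroup G] [NormedSpace ℂ G]

/-- The map `f` is biholomorphic from the open set `s` onto the open set `f '' s`. -/
structure IsBiholomorphicOn (f : E → F) (s : Set E) : Prop where
  isOpen : IsOpen s
  differentiableOn : DifferentiableOn ℂ f s
  isOpen_image : IsOpen (f '' s)
  exists_leftInvOn : ∃ h : F → E, DifferentiableOn ℂ h (f '' s) ∧ LeftInvOn h f s

namespace IsBiholomorphicOn

variable {f : E → F} {s t : Set E}

lemma injOn (hf : IsBiholomorphicOn f s) : InjOn f s :=
  let ⟨_, _, hh⟩ := hf.exists_leftInvOn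
  hh.injOn

lemma mono (hf : IsBiholomorphicOn f s) (ht : IsOpen t) (hts : t ⊆ s) : IsBiholomorphicOn f t := by
  obtain ⟨h, hhd, hh⟩ := hf.exists_leftInvOn
  refine ⟨ht, hf.differentiableOn.mono hts, ?_, h, hhd.mono (image_mono hts), hh.mono hts⟩
  rw [← inter_eq_self_of_subset_left hts, hh.image_inter', inter_comm]
  exact hhd.continuousOn.isOpen_inter_preimage hf.isOpen_image ht

lemma congr {g : E → F} (hf : IsBiholomorphicOn f s) (hfg : EqOn g f s) :
    IsBiholomorphicOn g s := by
  obtain ⟨h, hhd, hh⟩ := hf.exists_leftInvOn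
  have himage : g '' s = f '' s := hfg.image_eq
  exact ⟨hf.isOpen, hf.differentiableOn.congr hfg, himage ▸ hf.isOpen_image, h, himage ▸ hhd,
    hh.congr_right hfg.symm⟩

lemma comp {g : F → G} {t : Set F} (hg : IsBiholomorphicOn g t) (hf : IsBiholomorphicOn f s)
    (hst : MapsTo f s t) : IsBiholomorphicOn (g ∘ f) s := by
  obtain ⟨h, hhd, hh⟩ := hf.exists_leftInvOn
  obtain ⟨k, hkd, hk⟩ := hg.exists_leftInvOn
  have hsub : f '' s ⊆ t := hst.image_subset
  have hks : MapsTo k (g '' (f '' s)) (f '' s) := by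
    rintro _ ⟨w, hw, rfl⟩
    rwa [hk (hsub hw)]
  refine ⟨hf.isOpen, hg.differentiableOn.comp hf.differentiableOn hst, ?_, h ∘ k, ?_, ?_⟩
  · rw [image_comp]
    exact (hg.mono hf.isOpen_image hsub).isOpen_image
  · rw [image_comp]
    exact hhd.comp (hkd.mono (image_mono hsub)) hks
  · exact hh.comp hk hst

end IsBiholomorphicOn

lemma isBiholomorphicOn_of_injOn {f : E → F} {s : Set E} (hinj : InjOn f s)
    (hloc : ∀ x ∈ s, ∃ t ⊆ s, x ∈ t ∧ IsBiholomorphicOn f t) : IsBiholomorphicOn f s := by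
  choose! t hts hxt ht using hloc
  have hs : s = ⋃ x ∈ s, t x :=
    Subset.antisymm (fun x hx => mem_biUnion hx (hxt x hx)) (iUnion₂_subset hts)
  have hfs : f '' s = ⋃ x ∈ s, f '' t x := by rw [← image_iUnion₂, ← hs]
  have : Nonempty E := ⟨0⟩
  refine ⟨?_, fun x hx => ?_, ?_, Function.invFunOn f s, ?_, hinj.leftInvOn_invFunOn⟩
  · rw [hs]
    exact isOpen_biUnion fun x hx => (ht x hx).isOpen
  · exact ((ht x hx).differentiableOn.differentiableAt
      ((ht x hx).isOpen.mem_nhds (hxt x hx))).differentiableWithinAt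
  · rw [hfs]
    exact isOpen_biUnion fun x hx => (ht x hx).isOpen_image
  · rintro _ ⟨x, hx, rfl⟩
    obtain ⟨h, hhd, hh⟩ := (ht x hx).exists_leftInvOn
    have heq : EqOn (Function.invFunOn f s) h (f '' t x) := by
      rintro _ ⟨y, hy, rfl⟩
      rw [hh hy, hinj.leftInvOn_invFunOn (hts x hx hy)]
    exact ((hhd.congr heq).differentiableAt
      ((ht x hx).isOpen_image.mem_nhds (mem_image_of_mem f (hxt x hx)))).differentiableWithinAt

lemma isBiholomorphicOn_iUnion {f : E → F} {s : ℕ → Set E} (hs : Monotone s)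
    (hf : ∀ n, IsBiholomorphicOn f (s n)) : IsBiholomorphicOn f (⋃ n, s n) := by
  refine isBiholomorphicOn_of_injOn (inj_on_iUnion_of_directed hs.directed_le fun n => (hf n).injOn)
    fun x hx => ?_
  obtain ⟨n, hn⟩ := mem_iUnion.1 hx
  exact ⟨s n, subset_iUnion s n, hn, hf n⟩

lemma isBiholomorphicOn_of_fderiv_equiv [CompleteSpace E] {f : E → F} {s : Set E} (hs : IsOpen s)
    (hf : DifferentiableOn ℂ f s) (hinj : InjOn f s)
    (hequiv : ∀ x ∈ s, ∃ e : E ≃L[ℂ] F, (e : E →L[ℂ] F) = fderiv ℂ f x) :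
    IsBiholomorphicOn f s := by
  have hstrict : ∀ x ∈ s, ∃ e : E ≃L[ℂ] F, HasStrictFDerivAt f (e : E →L[ℂ] F) x := fun x hx => by
    obtain ⟨e, he⟩ := hequiv x hx
    exact ⟨e, he ▸ hasStrictFDerivAt_of_differentiableOn hs hf hx⟩
  refine ⟨hs, hf, ?_, Function.invFunOn f s, ?_, hinj.leftInvOn_invFunOn⟩
  · rw [isOpen_iff_mem_nhds]
    rintro _ ⟨x, hx, rfl⟩
    obtain ⟨e, he⟩ := hstrict x hx
    rw [← he.map_nhds_eq_of_equiv]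
    exact image_mem_map (hs.mem_nhds hx)
  · rintro _ ⟨x, hx, rfl⟩
    obtain ⟨e, he⟩ := hstrict x hx
    have hinv : ∀ᶠ y in 𝓝 x, Function.invFunOn f s (f y) = y := by
      filter_upwards [hs.mem_nhds hx] with y hy using hinj.leftInvOn_invFunOn hy
    exact (he.to_local_left_inverse hinv).hasFDerivAt.differentiableAt.differentiableWithinAt

lemma isBiholomorphicOn_of_norm_sub_id_le [CompleteSpace E] {Φ : E → E} {x : E} {r R : ℝ}
    (hrR : r < R) (hΦ : DifferentiableOn ℂ Φ (ball x R))
    (hid : ∀ z ∈ ball x R, ‖Φ z - z‖ ≤ (R - r) / 4) : IsBiholomorphicOn Φ (ball x r) := by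
  have hsub : ∀ y ∈ ball x r, ball y (R - r) ⊆ ball x R := fun y hy =>
    ball_subset_ball' (by rw [mem_ball] at hy; linarith)
  have hd : ∀ y ∈ ball x r, DifferentiableAt ℂ Φ y := fun y hy =>
    hΦ.differentiableAt (mem_of_superset (ball_mem_nhds y (sub_pos.2 hrR)) (hsub y hy))
  have hfderiv : ∀ y ∈ ball x r, ‖fderiv ℂ Φ y - ContinuousLinearMap.id ℂ E‖ ≤ 1 / 2 := by
    intro y hy
    have hCauchy := norm_fderiv_le_of_forall_mem_ball (sub_pos.2 hrR)
      ((hΦ.mono (hsub y hy)).sub differentiableOn_id) fun z hz => hid z (hsub y hy hz)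
    rw [fderiv_sub (hd y hy) differentiableAt_id, fderiv_id] at hCauchy
    have : R - r ≠ 0 := (sub_pos.2 hrR).ne'
    exact hCauchy.trans_eq (by field_simp; norm_num)
  refine isBiholomorphicOn_of_fderiv_equiv isOpen_ball
    (fun y hy => (hd y hy).differentiableWithinAt) (fun y hy z hz hyz => ?_) fun y hy => ?_
  · have hmv := Convex.norm_image_sub_le_of_norm_fderiv_le' hd hfderiv (convex_ball x r) hy hz
    rw [hyz, sub_self, zero_sub, norm_neg, ContinuousLinearMap.id_apply] at hmv
    exact (sub_eq_zero.1 (norm_eq_zero.1 (by linarith [norm_nonneg (z - y)]))).symm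
  · have hlt : ‖ContinuousLinearMap.id ℂ E - fderiv ℂ Φ y‖ < 1 := by
      rw [norm_sub_rev]
      exact (hfderiv y hy).trans_lt (by norm_num)
    exact ⟨ContinuousLinearEquiv.unitsEquiv ℂ E (Units.oneSub _ hlt), by
      ext v; simp [Units.oneSub]⟩

lemma exists_pos_forall_dist_lt {X Y : Type*} [PseudoMetricSpace X] [PseudoMetricSpace Y]
    {K : Set X} (hK : IsCompact K) {f : X → Y} (hf : ∀ x ∈ K, ContinuousAt f x) {ε : ℝ}
    (hε : 0 < ε) : ∃ δ > 0, ∀ x ∈ K, ∀ y, dist y x < δ → dist (f y) (f x) < ε := by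
  obtain ⟨δ, hδ, h⟩ := Metric.mem_uniformity_dist.1
    (hK.uniformContinuousAt_of_continuousAt f hf (dist_mem_uniformity hε))
  refine ⟨δ, hδ, fun x hx y hy => ?_⟩
  rw [dist_comm] at hy ⊢
  exact h hy hx

/-- Compare `f` with `g` through `g⁻¹ ∘ f`, which is close to the identity. -/
lemma IsBiholomorphicOn.exists_forall_norm_sub_le [ProperSpace E] {g : E → F} {D : Set E}
    (hg : IsBiholomorphicOn g D) {x : E} {r R : ℝ} (hrR : r < R) (hD : closedBall x R ⊆ D) :
    ∃ η > 0, ∀ f : E → F, DifferentiableOn ℂ f (ball x R) → (∀ z ∈ ball x R, ‖f z - g z‖ ≤ η) →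
      IsBiholomorphicOn f (ball x r) ∧ MapsTo f (ball x r) (g '' D) := by
  obtain ⟨h, hhd, hh⟩ := hg.exists_leftInvOn
  have hε : 0 < (R - r) / 4 := by linarith
  have hK : IsCompact (g '' closedBall x R) :=
    (isCompact_closedBall x R).image_of_continuousOn (hg.differentiableOn.continuousOn.mono hD)
  obtain ⟨η₁, hη₁, hthick⟩ := hK.exists_thickening_subset_open hg.isOpen_image (image_mono hD)
  obtain ⟨η₂, hη₂, hclose⟩ := exists_pos_forall_dist_lt hK (fun a ha =>
    hhd.continuousOn.continuousAt (hg.isOpen_image.mem_nhds (image_mono hD ha))) hε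
  refine ⟨min η₁ η₂ / 2, by positivity, fun f hf hfg => ?_⟩
  have hlt : ∀ z ∈ ball x R, dist (f z) (g z) < min η₁ η₂ := fun z hz => by
    rw [dist_eq_norm]
    exact (hfg z hz).trans_lt (half_lt_self (by positivity))
  have hmem : ∀ z ∈ ball x R, g z ∈ g '' closedBall x R := fun z hz =>
    mem_image_of_mem g (ball_subset_closedBall hz)
  have hfD : MapsTo f (ball x R) (g '' D) := fun z hz => hthick <| mem_thickening_iff.2
    ⟨g z, hmem z hz, (hlt z hz).trans_le (min_le_left _ _)⟩
  have hnear : ∀ z ∈ ball x R, ‖h (f z) - z‖ ≤ (R - r) / 4 := fun z hz => by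
    have hfz := hclose (g z) (hmem z hz) (f z) ((hlt z hz).trans_le (min_le_right _ _))
    rw [hh (hD (ball_subset_closedBall hz)), dist_eq_norm] at hfz
    exact hfz.le
  have hΦ : IsBiholomorphicOn (h ∘ f) (ball x r) :=
    isBiholomorphicOn_of_norm_sub_id_le hrR (hhd.comp hf hfD) hnear
  have hle : ball x r ⊆ ball x R := ball_subset_ball hrR.le
  have hhD : MapsTo h (g '' D) D := by
    rintro _ ⟨w, hw, rfl⟩
    rwa [hh hw]
  have hgh : EqOn f (g ∘ h ∘ f) (ball x r) := fun z hz => by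
    obtain ⟨w, hw, hwz⟩ := hfD (hle hz)
    simp only [Function.comp_apply, ← hwz, hh hw]
  exact ⟨(hg.comp hΦ fun z hz => hhD (hfD (hle hz))).congr hgh, hfD.mono_left hle⟩

end Biholomorphic

/-! ### Limits of biholomorphic maps -/

section Limit

lemma le_div_two_pow_of_forall_le_half {η : ℕ → ℝ} (hη : ∀ n, η (n + 1) ≤ η n / 2) (n : ℕ) :
    η n ≤ η 0 / 2 ^ n := by
  induction n with
  | zero => simp
  | succ n ih =>
    calc η (n + 1) ≤ η n / 2 := hη n
      _ ≤ η 0 / 2 ^ n / 2 := by linarith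
      _ = η 0 / 2 ^ (n + 1) := by rw [pow_succ, div_div]

lemma tendsto_zero_div_two_pow (C : ℝ) : Tendsto (fun k : ℕ => C / 2 ^ k) atTop (𝓝 0) := by
  simpa only [div_eq_mul_inv, inv_pow, mul_zero] using
    (tendsto_pow_atTop_nhds_zero_of_lt_one (by norm_num : (0 : ℝ) ≤ 2⁻¹) (by norm_num)).const_mul C

lemma iUnion_ball_of_forall_exists_lt {E : Type*} [SeminormedAddCommGroup E] {r : ℕ → ℝ} {R : ℝ}
    (hr : ∀ n, r n < R) (hlim : ∀ x < R, ∃ n, x < r n) : ⋃ n, ball (0 : E) (r n) = ball 0 R :=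
  Subset.antisymm (iUnion_subset fun n => ball_subset_ball (hr n).le) fun z hz =>
    mem_iUnion.2 ((hlim ‖z‖ (mem_ball_zero_iff.1 hz)).imp fun _ hn => mem_ball_zero_iff.2 hn)

lemma exists_mem_ball_norm_sub_lt {E F : Type*} [NormedAddCommGroup E] [NormedSpace ℝ E]
    [SeminormedAddCommGroup F] {g : E → F} {b : E} (hg : ContinuousOn g (closedBall 0 1))
    (hb : b ∈ closedBall 0 1) {ε : ℝ} (hε : 0 < ε) : ∃ a ∈ ball 0 1, ‖g a - g b‖ < ε := by
  have hmem : g b ∈ closure (g '' ball 0 1) :=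
    ((hg b hb).mono ball_subset_closedBall).mem_closure_image (by rwa [closure_ball _ one_ne_zero])
  obtain ⟨-, ⟨a, ha, rfl⟩, hab⟩ := Metric.mem_closure_iff.1 hmem ε hε
  exact ⟨a, ha, by rwa [← dist_eq_norm, dist_comm]⟩

lemma exists_limit_of_norm_sub_le {X E : Type*} [NormedAddCommGroup E] [CompleteSpace E]
    {g : ℕ → X → E} {s : ℕ → Set X} {η : ℕ → ℝ} (hs : Monotone s)
    (hη : ∀ n, η (n + 1) ≤ η n / 2) (hg : ∀ n, ∀ z ∈ s n, ‖g (n + 1) z - g n z‖ ≤ η n / 2) :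
    ∃ f : X → E, ∀ n, ∀ z ∈ s n, ‖f z - g n z‖ ≤ η n := by
  refine ⟨fun z => limUnder atTop fun k => g k z, fun n z hz => ?_⟩
  have hdist : ∀ k, dist (g (n + k) z) (g (n + (k + 1)) z) ≤ η n / 2 / 2 ^ k := fun k => by
    rw [dist_comm, dist_eq_norm]
    calc ‖g (n + (k + 1)) z - g (n + k) z‖ ≤ η (n + k) / 2 :=
          hg (n + k) z (hs (Nat.le_add_right n k) hz)
      _ ≤ η n / 2 ^ k / 2 := div_le_div_of_nonneg_right
          (le_div_two_pow_of_forall_le_half (η := fun k => η (n + k)) (fun k => hη (n + k)) k)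
          two_pos.le
      _ = η n / 2 / 2 ^ k := div_right_comm _ _ _
  obtain ⟨L, hL⟩ := cauchySeq_tendsto_of_complete (cauchySeq_of_le_geometric_two hdist)
  have hlim : Tendsto (fun k => g k z) atTop (𝓝 L) :=
    (tendsto_add_atTop_iff_nat n).1 (hL.congr fun k => by rw [add_comm])
  simp only [hlim.limUnder_eq]
  rw [← dist_eq_norm, dist_comm]
  exact dist_le_of_le_geometric_two_of_tendsto₀ hdist hL

variable {E : Type*} [NormedAddCommGroup E] [NormedSpace ℂ E]

lemma exists_holomorphic_limit {F : Type*} [NormedAddCommGroup F] [NormedSpace ℂ F]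
    [CompleteSpace F] {g : ℕ → E → F} {s : ℕ → Set E} {η : ℕ → ℝ} (hs : Monotone s)
    (hso : ∀ n, IsOpen (s n)) (hη : ∀ n, η (n + 1) ≤ η n / 2)
    (hgd : ∀ n, DifferentiableOn ℂ (g n) (⋃ k, s k))
    (hg : ∀ n, ∀ z ∈ s n, ‖g (n + 1) z - g n z‖ ≤ η n / 2) :
    ∃ f : E → F, DifferentiableOn ℂ f (⋃ k, s k) ∧ ∀ n, ∀ z ∈ s n, ‖f z - g n z‖ ≤ η n := by
  obtain ⟨f, hf⟩ := exists_limit_of_norm_sub_le hs hη hg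
  refine ⟨f, fun z hz => ?_, hf⟩
  obtain ⟨n, hn⟩ := mem_iUnion.1 hz
  have hunif : TendstoUniformlyOn (fun k => g (n + k)) f atTop (s n) := by
    rw [Metric.tendstoUniformlyOn_iff]
    intro ε hε
    filter_upwards [(tendsto_zero_div_two_pow (η n)).eventually_lt_const hε] with k hk w hw
    rw [dist_eq_norm]
    exact ((hf _ w (hs (Nat.le_add_right n k) hw)).trans
      (le_div_two_pow_of_forall_le_half (η := fun k => η (n + k))
        (fun k => hη (n + k)) k)).trans_lt hk
  exact ((differentiableOn_of_tendstoUniformlyOn (hso n)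
    (fun k => (hgd _).mono (subset_iUnion s n)) hunif).differentiableAt
    ((hso n).mem_nhds hn)).differentiableWithinAt

/-- The set `Q` is exhausted, up to its boundary, by a biholomorphic copy of the unit ball. -/
def HasDenseBall (Q : Set E) : Prop :=
  ∃ g : E → E, IsBiholomorphicOn g (ball 0 1) ∧ g '' ball 0 1 ⊆ Q ∧ Q ⊆ closure (g '' ball 0 1)

/-- A class `𝒢` of biholomorphic maps from neighbourhoods of the closed unit ball into `Q` which can
be stretched towards any point of `Q`, up to a small change on smaller balls. -/
structure IsStretchable (𝒢 : Set (E → E)) (Q : Set E) : Prop where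
  exists_isBiholomorphicOn : ∀ g ∈ 𝒢, ∃ D,
    closedBall 0 1 ⊆ D ∧ IsBiholomorphicOn g D ∧ MapsTo g D Q
  exists_near : ∀ g ∈ 𝒢, ∀ q ∈ Q, ∀ r < 1, ∀ η > 0, ∃ g' ∈ 𝒢,
    (∀ z ∈ closedBall 0 r, ‖g' z - g z‖ ≤ η) ∧ ∃ a ∈ closedBall 0 1, ‖g' a - q‖ ≤ η

/-- The data carried along an inductive sequence of stretchings: a map `g` such that holomorphic
maps which are `η`-close to `g` on the ball of radius `r` are biholomorphic on the ball of radius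
`2 * r - 1`. -/
structure StableMap (𝒢 : Set (E → E)) (Q : Set E) where
  g : E → E
  r : ℝ
  η : ℝ
  mem : g ∈ 𝒢
  r_lt_one : r < 1
  η_pos : 0 < η
  isBiholomorphicOn : ∀ f : E → E, DifferentiableOn ℂ f (ball 0 1) →
    (∀ z ∈ ball 0 r, ‖f z - g z‖ ≤ η) →
      IsBiholomorphicOn f (ball 0 (2 * r - 1)) ∧ MapsTo f (ball 0 (2 * r - 1)) Q

variable [ProperSpace E] {𝒢 : Set (E → E)} {Q : Set E}

lemma IsStretchable.exists_stableMap (h : IsStretchable 𝒢 Q) {g : E → E} (hg : g ∈ 𝒢) {r η : ℝ}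
    (hr : r < 1) (hη : 0 < η) : ∃ σ : StableMap 𝒢 Q, σ.g = g ∧ σ.r = r ∧ σ.η ≤ η := by
  obtain ⟨D, hD, hgD, hDQ⟩ := h.exists_isBiholomorphicOn g hg
  obtain ⟨η', hη', hstable⟩ := hgD.exists_forall_norm_sub_le (x := 0) (r := 2 * r - 1) (R := r)
    (by linarith) ((closedBall_subset_closedBall hr.le).trans hD)
  refine ⟨⟨g, r, min η η', hg, hr, lt_min hη hη', fun f hf hfg => ?_⟩, rfl, rfl, min_le_left _ _⟩
  obtain ⟨hfb, hfm⟩ := hstable f (hf.mono (ball_subset_ball hr.le))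
    fun z hz => (hfg z hz).trans (min_le_right _ _)
  exact ⟨hfb, hfm.mono_right hDQ.image_subset⟩

lemma IsStretchable.exists_next (h : IsStretchable 𝒢 Q) (σ : StableMap 𝒢 Q) {q : E} (hq : q ∈ Q) :
    ∃ τ : StableMap 𝒢 Q, (∀ z ∈ ball 0 σ.r, ‖τ.g z - σ.g z‖ ≤ σ.η / 2) ∧ τ.η ≤ σ.η / 2 ∧
      (1 + σ.r) / 2 ≤ τ.r ∧ ∃ a ∈ ball 0 τ.r, ‖τ.g a - q‖ ≤ σ.η / 2 := by
  have hr := σ.r_lt_one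
  have hη : 0 < σ.η / 4 := by linarith [σ.η_pos]
  obtain ⟨g', hg', hnear, b, hb, hbq⟩ := h.exists_near σ.g σ.mem q hq σ.r hr (σ.η / 4) hη
  obtain ⟨D, hD, hgD, -⟩ := h.exists_isBiholomorphicOn g' hg'
  obtain ⟨a, ha, hab⟩ :=
    exists_mem_ball_norm_sub_lt (hgD.differentiableOn.continuousOn.mono hD) hb hη
  rw [mem_ball_zero_iff] at ha
  obtain ⟨τ, rfl, hτr, hτη⟩ := h.exists_stableMap hg'
    (max_lt (by linarith : (1 + σ.r) / 2 < 1) (by linarith : (1 + ‖a‖) / 2 < 1))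
    (half_pos σ.η_pos)
  refine ⟨τ, fun z hz => (hnear z (ball_subset_closedBall hz)).trans (by linarith), hτη,
    hτr ▸ le_max_left _ _, a, ?_, ?_⟩
  · rw [mem_ball_zero_iff, hτr]
    exact lt_max_of_lt_right (by linarith)
  · linarith [norm_sub_le_norm_sub_add_norm_sub (τ.g a) (τ.g b) q]

lemma IsStretchable.exists_seq (h : IsStretchable 𝒢 Q) (hne : 𝒢.Nonempty) :
    ∃ σ : ℕ → StableMap 𝒢 Q,
      (∀ n, ∀ z ∈ ball 0 (σ n).r, ‖(σ (n + 1)).g z - (σ n).g z‖ ≤ (σ n).η / 2) ∧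
      (∀ n, (σ (n + 1)).η ≤ (σ n).η / 2) ∧ (∀ n, (1 + (σ n).r) / 2 ≤ (σ (n + 1)).r) ∧
      ∀ q ∈ Q, ∀ ε > 0, ∃ n, (σ n).η ≤ ε ∧ ∃ a ∈ ball 0 (σ n).r, ‖(σ n).g a - q‖ ≤ ε := by
  obtain ⟨g, hg⟩ := hne
  obtain ⟨σ₀, -⟩ := h.exists_stableMap hg zero_lt_one zero_lt_one
  obtain ⟨D, hD, -, hDQ⟩ := h.exists_isBiholomorphicOn g hg
  have : Nonempty Q := ⟨g 0, hDQ (hD (mem_closedBall_self zero_le_one))⟩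
  choose next hnear hη hr hreach using fun τ (q : Q) => h.exists_next τ q.2
  let u := TopologicalSpace.denseSeq Q
  -- every index occurs infinitely often among the numbers `(Nat.unpair n).1`
  let σ : ℕ → StableMap 𝒢 Q := fun n => Nat.rec σ₀ (fun n τ => next τ (u n.unpair.1)) n
  have hσ : ∀ n, (σ (n + 1)).η ≤ (σ n).η / 2 := fun n => hη _ _
  refine ⟨σ, fun n => hnear _ _, hσ, fun n => hr _ _, fun q hq ε hε => ?_⟩
  obtain ⟨N, hN⟩ := eventually_atTop.1
    ((tendsto_zero_div_two_pow (σ 0).η).eventually_lt_const (half_pos hε))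
  obtain ⟨i, hi⟩ := (TopologicalSpace.denseRange_denseSeq Q).exists_dist_lt ⟨q, hq⟩ (half_pos hε)
  set n := Nat.pair i N with hn
  have hηn : (σ n).η < ε / 2 :=
    (le_div_two_pow_of_forall_le_half (η := fun k => (σ k).η) hσ n).trans_lt
      (hN n (Nat.right_le_pair i N))
  obtain ⟨a, ha, hau⟩ := hreach (σ n) (u i)
  have hσn : σ (n + 1) = next (σ n) (u i) := by
    change next (σ n) (u n.unpair.1) = _
    rw [hn, Nat.unpair_pair]
  refine ⟨n + 1, by linarith [hσ n, (σ n).η_pos], a, hσn ▸ ha, ?_⟩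
  have hui : ‖(u i : E) - q‖ < ε / 2 := by rwa [← dist_eq_norm, dist_comm]
  calc ‖(σ (n + 1)).g a - q‖ ≤ ‖(σ (n + 1)).g a - u i‖ + ‖(u i : E) - q‖ :=
        norm_sub_le_norm_sub_add_norm_sub _ _ _
    _ ≤ ε := by rw [hσn]; linarith [(σ n).η_pos]

theorem IsStretchable.hasDenseBall (h : IsStretchable 𝒢 Q) (hne : 𝒢.Nonempty) :
    HasDenseBall Q := by
  obtain ⟨σ, hnear, hη, hr, hreach⟩ := h.exists_seq hne
  have hmono : Monotone fun n => (σ n).r :=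
    monotone_nat_of_le_succ fun n => by linarith [hr n, (σ n).r_lt_one]
  have hlim : ∀ x < 1, ∃ n, x < (σ n).r := fun x hx => by
    obtain ⟨n, hn⟩ := ((tendsto_zero_div_two_pow (1 - (σ 0).r)).eventually_lt_const
      (sub_pos.2 hx)).exists
    have hrn := le_div_two_pow_of_forall_le_half (η := fun n => 1 - (σ n).r)
      (fun n => by linarith [hr n]) n
    exact ⟨n, by linarith⟩
  have hunion : ⋃ n, ball (0 : E) (σ n).r = ball 0 1 :=
    iUnion_ball_of_forall_exists_lt (fun n => (σ n).r_lt_one) hlim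
  have hunion' : ⋃ n, ball (0 : E) (2 * (σ n).r - 1) = ball 0 1 :=
    iUnion_ball_of_forall_exists_lt (fun n => by linarith [(σ n).r_lt_one]) fun x hx =>
      (hlim ((1 + x) / 2) (by linarith)).imp fun n hn => by linarith
  have hd : ∀ n, DifferentiableOn ℂ (σ n).g (ball 0 1) := fun n =>
    let ⟨_, hD, hgD, _⟩ := h.exists_isBiholomorphicOn _ (σ n).mem
    hgD.differentiableOn.mono (ball_subset_closedBall.trans hD)
  obtain ⟨f, hf, hfg⟩ := exists_holomorphic_limit (s := fun n => ball 0 (σ n).r)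
    (fun _ _ hmn => ball_subset_ball (hmono hmn)) (fun _ => isOpen_ball) hη
    (fun n => hunion ▸ hd n) hnear
  have hstable := fun n => (σ n).isBiholomorphicOn f (hunion ▸ hf) (hfg n)
  refine ⟨f, hunion' ▸ isBiholomorphicOn_iUnion (fun m n hmn => ball_subset_ball (by
    linarith [hmono hmn])) fun n => (hstable n).1, ?_, fun q hq => ?_⟩
  · rw [← hunion', image_iUnion]
    exact iUnion_subset fun n => (hstable n).2.image_subset
  · refine Metric.mem_closure_iff.2 fun ε hε => ?_
    obtain ⟨n, hηn, a, ha, haq⟩ := hreach q hq (ε / 3) (by linarith)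
    refine ⟨f a, mem_image_of_mem f (ball_subset_ball (σ n).r_lt_one.le ha), ?_⟩
    rw [dist_comm, dist_eq_norm]
    linarith [norm_sub_le_norm_sub_add_norm_sub (f a) ((σ n).g a) q, hfg n a ha]

end Limit

/-! ### Convex domains in the plane -/

section Plane

lemma injOn_of_deriv_re_pos {f : ℂ → ℂ} {s : Set ℂ} (hs : Convex ℝ s) (hso : IsOpen s)
    (hf : DifferentiableOn ℂ f s) (hpos : ∀ z ∈ s, 0 < (deriv f z).re) : InjOn f s := by
  intro z hz w hw hzw
  by_contra hne
  have hwz : w - z ≠ 0 := sub_ne_zero.2 (Ne.symm hne)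
  have hmem : ∀ t ∈ Icc (0 : ℝ) 1, z + t * (w - z) ∈ s := fun t ht => by
    simpa using hs.add_smul_sub_mem hz hw ht
  have hderiv : ∀ t ∈ Icc (0 : ℝ) 1, HasDerivAt
      (fun t : ℝ => (f (z + t * (w - z)) / (w - z)).re) (deriv f (z + t * (w - z))).re t := by
    intro t ht
    have hinner : HasDerivAt (fun t : ℂ => z + t * (w - z)) (w - z) t := by
      simpa using ((hasDerivAt_id (t : ℂ)).mul_const (w - z)).const_add z
    have hout := ((hf.differentiableAt (hso.mem_nhds (hmem t ht))).hasDerivAt.comp (t : ℂ)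
      hinner).div_const (w - z)
    rw [mul_div_cancel_right₀ _ hwz] at hout
    exact hout.real_of_complex
  obtain ⟨t, ht, hzero⟩ := exists_hasDerivAt_eq_zero zero_lt_one
    (fun t ht => (hderiv t ht).continuousAt.continuousWithinAt) (by simp [hzw])
    (fun t ht => hderiv t (Ioo_subset_Icc_self ht))
  exact (hpos _ (hmem t (Ioo_subset_Icc_self ht))).ne' hzero

lemma isBiholomorphicOn_of_deriv_re_pos {f : ℂ → ℂ} {s : Set ℂ} (hs : Convex ℝ s)
    (hso : IsOpen s) (hf : DifferentiableOn ℂ f s) (hpos : ∀ z ∈ s, 0 < (deriv f z).re) :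
    IsBiholomorphicOn f s := by
  refine isBiholomorphicOn_of_fderiv_equiv hso hf (injOn_of_deriv_re_pos hs hso hf hpos)
    fun z hz => ⟨ContinuousLinearEquiv.unitsEquivAut ℂ (Units.mk0 (deriv f z) fun h => ?_), ?_⟩
  · simpa [h] using hpos z hz
  · ext
    simp

lemma isSimplyConnected_univ {X : Type*} [TopologicalSpace X] [ContractibleSpace X] :
    IsSimplyConnected (univ : Set X) :=
  have := (Homeomorph.Set.univ X).contractibleSpace
  SimplyConnectedSpace.ofContractible _

lemma continuous_inv_max_one_norm_smul {E : Type*} [NormedAddCommGroup E] [NormedSpace ℝ E] :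
    Continuous fun z : E => (max 1 ‖z‖)⁻¹ • z :=
  ((continuous_const.max continuous_norm).inv₀ fun z =>
    (zero_lt_one.trans_le (le_max_left 1 ‖z‖)).ne').smul continuous_id

lemma exists_continuous_exp_eq_on_closedBall {h : ℂ → ℂ} (hc : ContinuousOn h (closedBall 0 1))
    (h0 : ∀ z ∈ closedBall 0 1, h z ≠ 0) :
    ∃ L : ℂ → ℂ, Continuous L ∧ ∀ z ∈ closedBall 0 1, Complex.exp (L z) = h z := by
  have hmem : ∀ z : ℂ, (max 1 ‖z‖)⁻¹ • z ∈ closedBall 0 1 := fun z => by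
    have : 0 < max 1 ‖z‖ := zero_lt_one.trans_le (le_max_left _ _)
    rw [mem_closedBall_zero_iff, norm_smul, norm_inv, Real.norm_of_nonneg this.le,
      inv_mul_le_one₀ this]
    exact le_max_right _ _
  have hconv : ContractibleSpace ℂ := RealTopologicalVectorSpace.contractibleSpace
  obtain ⟨L, hL, hexp⟩ := Complex.exists_continuousOn_eqOn_exp_comp isSimplyConnected_univ
    isOpen_univ (hc.comp_continuous continuous_inv_max_one_norm_smul hmem).continuousOn
    (by rintro ⟨z, -, hz⟩; exact h0 _ (hmem z) hz)
  refine ⟨L, continuousOn_univ.1 hL, fun z hz => ?_⟩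
  simpa [max_eq_left (mem_closedBall_zero_iff.1 hz)] using hexp (mem_univ z)

/-- If `h = exp ∘ L`, then `Im L (exp (iθ)) - θ` drops by `2π` along the circle, hence attains a
multiple of `2π`. -/
lemma exists_mem_sphere_eq_mul {h : ℂ → ℂ} (hc : ContinuousOn h (closedBall 0 1))
    (h0 : ∀ z ∈ closedBall 0 1, h z ≠ 0) :
    ∃ u ∈ sphere (0 : ℂ) 1, ∃ ℓ : ℝ, 0 < ℓ ∧ h u = ℓ * u := by
  obtain ⟨L, hL, hexp⟩ := exists_continuous_exp_eq_on_closedBall hc h0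
  let ψ : ℝ → ℝ := fun θ => (L (Complex.exp (θ * Complex.I))).im - θ
  have hψ : Continuous ψ := by fun_prop
  have hdrop : ψ (2 * Real.pi) = ψ 0 - 2 * Real.pi := by simp [ψ]
  let k : ℤ := ⌊ψ 0 / (2 * Real.pi)⌋
  have hk : (k : ℝ) * (2 * Real.pi) ∈ Icc (ψ (2 * Real.pi)) (ψ 0) := by
    constructor
    · have := (div_lt_iff₀ Real.two_pi_pos).1 (Int.lt_floor_add_one (ψ 0 / (2 * Real.pi)))
      rw [hdrop]
      linarith
    · exact (le_div_iff₀ Real.two_pi_pos).1 (Int.floor_le _)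
  obtain ⟨θ, -, hθ⟩ := intermediate_value_Icc' Real.two_pi_pos.le hψ.continuousOn hk
  set u := Complex.exp (θ * Complex.I)
  have hnorm : ‖u‖ = 1 := Complex.norm_exp_ofReal_mul_I θ
  have hLu : L u = (L u).re + θ * Complex.I + k * (2 * Real.pi * Complex.I) := by
    have him : (L u).im = θ + k * (2 * Real.pi) := by simp only [← hθ, ψ, u]; ring
    rw [← Complex.re_add_im (L u), him]
    push_cast [Complex.add_re, Complex.ofReal_re]
    simp
    ring
  refine ⟨u, mem_sphere_zero_iff_norm.2 hnorm, Real.exp (L u).re, Real.exp_pos _, ?_⟩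
  rw [← hexp u (mem_closedBall_zero_iff.2 hnorm.le), hLu, Complex.exp_add,
    Complex.exp_int_mul_two_pi_mul_I, mul_one, Complex.exp_add, ← hLu, Complex.ofReal_exp]

lemma norm_log_sub_log_norm_le {w : ℂ} (hw : 0 < w.re) :
    ‖Complex.log w - Real.log ‖w‖‖ ≤ 2 := by
  have harg : Complex.log w - Real.log ‖w‖ = w.arg * Complex.I := by
    rw [Complex.log, add_sub_cancel_left]
  rw [harg, norm_mul, Complex.norm_I, mul_one, Complex.norm_real, Real.norm_eq_abs]
  linarith [Complex.abs_arg_le_pi_div_two_iff.2 hw.le, Real.pi_lt_four]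

/-- For `δ` and `1 - c` small positive, `finger δ c` is nearly constant on the closed unit disc away
from `1`, and maps a neighbourhood of `1` to a long thin finger along the positive real axis. -/
noncomputable def finger (δ c : ℝ) (z : ℂ) : ℂ := -δ * Complex.log (1 - c * z)

variable {δ c : ℝ}

lemma re_one_sub_mul_pos (hc : 0 < c) {z : ℂ} (hz : z ∈ ball 0 c⁻¹) : 0 < (1 - c * z).re := by
  have hle : (c * z).re ≤ c * ‖z‖ := by
    simpa using mul_le_mul_of_nonneg_left (Complex.re_le_norm z) hc.le
  have hlt : c * ‖z‖ < 1 := by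
    rw [mem_ball_zero_iff] at hz
    calc c * ‖z‖ < c * c⁻¹ := mul_lt_mul_of_pos_left hz hc
      _ = 1 := mul_inv_cancel₀ hc.ne'
  rw [Complex.sub_re, Complex.one_re]
  linarith

lemma hasDerivAt_finger (hc : 0 < c) {z : ℂ} (hz : z ∈ ball 0 c⁻¹) :
    HasDerivAt (finger δ c) (δ * c / (1 - c * z)) z := by
  have hlin : HasDerivAt (fun z : ℂ => 1 - c * z) (-c) z := by
    simpa using ((hasDerivAt_id z).const_mul (c : ℂ)).const_sub 1
  refine ((hlin.clog (Or.inl (re_one_sub_mul_pos hc hz))).const_mul (-δ : ℂ)).congr_deriv ?_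
  ring

lemma deriv_finger_re_pos (hδ : 0 < δ) (hc : 0 < c) {z : ℂ} (hz : z ∈ ball 0 c⁻¹) :
    0 < (deriv (finger δ c) z).re := by
  have hre := re_one_sub_mul_pos hc hz
  have hne : 1 - c * z ≠ 0 := fun h => by simp [h] at hre
  rw [(hasDerivAt_finger hc hz).deriv, ← Complex.ofReal_mul, div_eq_mul_inv, Complex.re_ofReal_mul,
    Complex.inv_re]
  have := Complex.normSq_pos.2 hne
  positivity

lemma norm_finger_add_log_le (hδ : 0 ≤ δ) (hc : 0 < c) {z : ℂ} (hz : z ∈ ball 0 c⁻¹) :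
    ‖finger δ c z - (-δ * Real.log ‖1 - c * z‖ : ℝ)‖ ≤ 2 * δ := by
  have hfactor : finger δ c z - (-δ * Real.log ‖1 - c * z‖ : ℝ) =
      -δ * (Complex.log (1 - c * z) - Real.log ‖1 - c * z‖) := by
    rw [finger]
    push_cast
    ring
  rw [hfactor, norm_mul, norm_neg, Complex.norm_real, Real.norm_of_nonneg hδ, mul_comm]
  exact mul_le_mul_of_nonneg_right (norm_log_sub_log_norm_le (re_one_sub_mul_pos hc hz)) hδ

lemma closedBall_one_subset_ball_inv (hc : 0 < c) (hc1 : c < 1) :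
    closedBall (0 : ℂ) 1 ⊆ ball 0 c⁻¹ :=
  closedBall_subset_ball ((one_lt_inv₀ hc).2 hc1)

lemma one_sub_le_norm_one_sub_mul (hc : 0 ≤ c) {z : ℂ} (hz : z ∈ closedBall 0 1) :
    1 - c ≤ ‖1 - c * z‖ := by
  have hcz : ‖(c : ℂ) * z‖ ≤ c := by
    rw [norm_mul, Complex.norm_real, Real.norm_of_nonneg hc]
    exact mul_le_of_le_one_right hc (mem_closedBall_zero_iff.1 hz)
  calc 1 - c ≤ ‖(1 : ℂ)‖ - ‖(c : ℂ) * z‖ := by rw [norm_one]; linarith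
    _ ≤ ‖1 - c * z‖ := norm_sub_norm_le _ _

lemma log_norm_one_sub_mul_le_one (hc : 0 ≤ c) (hc1 : c < 1) {z : ℂ} (hz : z ∈ closedBall 0 1) :
    Real.log ‖1 - c * z‖ ≤ 1 := by
  have hcz : ‖(c : ℂ) * z‖ ≤ 1 := by
    rw [norm_mul, Complex.norm_real, Real.norm_of_nonneg hc]
    exact mul_le_one₀ hc1.le (norm_nonneg z) (mem_closedBall_zero_iff.1 hz)
  have hpos : 0 < ‖1 - c * z‖ :=
    (sub_pos.2 hc1).trans_le (one_sub_le_norm_one_sub_mul hc hz)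
  have hle : ‖1 - c * z‖ ≤ 2 := by
    linarith [norm_sub_le (1 : ℂ) (c * z), (norm_one : ‖(1 : ℂ)‖ = 1)]
  linarith [Real.log_le_sub_one_of_pos hpos]

lemma exists_norm_finger_sub_le (hδ : 0 ≤ δ) (hc : 0 < c) (hc1 : c < 1) {z : ℂ}
    (hz : z ∈ closedBall 0 1) :
    ∃ t ∈ Icc 0 (-δ * Real.log (1 - c)), ‖finger δ c z - t‖ ≤ 3 * δ := by
  have hlog_le := log_norm_one_sub_mul_le_one hc.le hc1 hz
  have hle_log : Real.log (1 - c) ≤ Real.log ‖1 - c * z‖ :=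
    Real.log_le_log (sub_pos.2 hc1) (one_sub_le_norm_one_sub_mul hc.le hz)
  have hlog_nonpos : Real.log (1 - c) ≤ 0 := Real.log_nonpos (by linarith) (by linarith)
  set x := -δ * Real.log ‖1 - c * z‖
  have hxt : ‖(x : ℂ) - (max 0 x : ℝ)‖ ≤ δ := by
    rw [← Complex.ofReal_sub, Complex.norm_real, Real.norm_eq_abs, abs_le]
    rcases max_cases 0 x with ⟨h, _⟩ | ⟨h, _⟩ <;> rw [h] <;> constructor <;> nlinarith
  refine ⟨max 0 x, ⟨le_max_left _ _, max_le (by nlinarith) (by nlinarith)⟩, ?_⟩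
  have := norm_finger_add_log_le hδ hc (closedBall_one_subset_ball_inv hc hc1 hz)
  linarith [norm_sub_le_norm_sub_add_norm_sub (finger δ c z) x (max 0 x : ℝ)]

lemma norm_finger_le (hδ : 0 ≤ δ) (hc : 0 < c) (hc1 : c < 1) {ρ : ℝ} (hρ : 0 < ρ)
    (hcρ : 1 - c ≤ ρ / 2) {z : ℂ} (hz : z ∈ closedBall 0 1) (hzρ : ρ ≤ ‖z - 1‖) :
    ‖finger δ c z‖ ≤ δ * (3 + |Real.log (ρ / 2)|) := by
  have hfar : ρ / 2 ≤ ‖1 - c * z‖ := by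
    have hsplit : 1 - c * z = (1 - z) + ((1 - c : ℝ) : ℂ) * z := by push_cast; ring
    have hsmall : ‖((1 - c : ℝ) : ℂ) * z‖ ≤ ρ / 2 := by
      rw [norm_mul, Complex.norm_real, Real.norm_of_nonneg (by linarith)]
      exact (mul_le_of_le_one_right (by linarith) (mem_closedBall_zero_iff.1 hz)).trans hcρ
    rw [hsplit]
    linarith [norm_sub_le_norm_add (1 - z) (((1 - c : ℝ) : ℂ) * z), norm_sub_rev z 1]
  have hlog : |Real.log ‖1 - c * z‖| ≤ 1 + |Real.log (ρ / 2)| := by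
    have := Real.log_le_log (half_pos hρ) hfar
    have := log_norm_one_sub_mul_le_one hc.le hc1 hz
    exact abs_le.2 ⟨by linarith [neg_abs_le (Real.log (ρ / 2))],
      by linarith [abs_nonneg (Real.log (ρ / 2))]⟩
  calc ‖finger δ c z‖
      ≤ ‖finger δ c z - (-δ * Real.log ‖1 - c * z‖ : ℝ)‖ +
          ‖((-δ * Real.log ‖1 - c * z‖ : ℝ) : ℂ)‖ :=
        norm_le_norm_sub_add _ _
    _ ≤ 2 * δ + δ * |Real.log ‖1 - c * z‖| := by
        rw [Complex.norm_real, norm_mul, norm_neg, Real.norm_of_nonneg hδ, Real.norm_eq_abs]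
        gcongr
        exact norm_finger_add_log_le hδ hc (closedBall_one_subset_ball_inv hc hc1 hz)
    _ ≤ 2 * δ + δ * (1 + |Real.log (ρ / 2)|) := by gcongr
    _ = δ * (3 + |Real.log (ρ / 2)|) := by ring

lemma exists_finger {ℓ ρ η : ℝ} (hℓ : 0 < ℓ) (hρ : 0 < ρ) (hη : 0 < η) :
    ∃ R > 1, ∃ p : ℂ → ℂ, DifferentiableOn ℂ p (ball 0 R) ∧
      (∀ z ∈ ball 0 R, 0 < (deriv p z).re) ∧ p 1 = ℓ ∧
      (∀ z ∈ closedBall 0 1, ∃ t ∈ Icc 0 ℓ, ‖p z - t‖ ≤ η) ∧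
      ∀ z ∈ closedBall 0 1, ρ ≤ ‖z - 1‖ → ‖p z‖ ≤ η := by
  set M := 3 + |Real.log (ρ / 2)|
  have hM3 : 3 ≤ M := by linarith [abs_nonneg (Real.log (ρ / 2))]
  set δ := min ℓ η / M
  have hδ : 0 < δ := div_pos (lt_min hℓ hη) (by linarith)
  have hδM : δ * M = min ℓ η := div_mul_cancel₀ _ (by linarith)
  have hδη : δ * M ≤ η := hδM ▸ min_le_right _ _
  have hratio : M ≤ ℓ / δ := (le_div_iff₀ hδ).2 (by rw [mul_comm, hδM]; exact min_le_left _ _)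
  set c := 1 - Real.exp (-(ℓ / δ)) with hc_def
  have hc : 0 < c := sub_pos.2 (Real.exp_lt_one_iff.2 (by linarith))
  have hc1 : c < 1 := sub_lt_self _ (Real.exp_pos _)
  have hlog : -δ * Real.log (1 - c) = ℓ := by
    rw [hc_def, sub_sub_cancel, Real.log_exp, neg_mul_neg, mul_div_cancel₀ _ hδ.ne']
  have hcρ : 1 - c ≤ ρ / 2 := by
    rw [hc_def, sub_sub_cancel, ← Real.le_log_iff_exp_le (half_pos hρ)]
    linarith [neg_abs_le (Real.log (ρ / 2))]
  refine ⟨c⁻¹, (one_lt_inv₀ hc).2 hc1, finger δ c,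
    fun z hz => (hasDerivAt_finger hc hz).differentiableAt.differentiableWithinAt,
    fun z => deriv_finger_re_pos hδ hc, ?_, fun z hz => ?_, fun z hz hzρ =>
      (norm_finger_le hδ.le hc hc1 hρ hcρ hz hzρ).trans hδη⟩
  · rw [finger, mul_one, ← Complex.ofReal_one, ← Complex.ofReal_sub,
      ← Complex.ofReal_log (sub_pos.2 hc1).le]
    exact_mod_cast hlog
  · obtain ⟨t, ht, hzt⟩ := exists_norm_finger_sub_le hδ.le hc hc1 hz
    exact ⟨t, hlog ▸ ht, hzt.trans (by nlinarith)⟩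

/-- The maps of the closed unit disc into `Q` which are holomorphic on a neighbourhood of the disc
with derivative of positive real part, which makes them injective there. -/
def positiveDerivMaps (Q : Set ℂ) : Set (ℂ → ℂ) :=
  {g | MapsTo g (closedBall 0 1) Q ∧
    ∃ R > 1, DifferentiableOn ℂ g (ball 0 R) ∧ ∀ z ∈ ball 0 R, 0 < (deriv g z).re}

variable {Q : Set ℂ}

lemma exists_isBiholomorphicOn_of_mem_positiveDerivMaps (hQ : IsOpen Q) {g : ℂ → ℂ}
    (hg : g ∈ positiveDerivMaps Q) :
    ∃ D, closedBall 0 1 ⊆ D ∧ IsBiholomorphicOn g D ∧ MapsTo g D Q := by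
  obtain ⟨hgQ, R, hR, hgd, hpos⟩ := hg
  exact ⟨ball 0 R ∩ g ⁻¹' Q, fun z hz => ⟨closedBall_subset_ball hR hz, hgQ hz⟩,
    (isBiholomorphicOn_of_deriv_re_pos (convex_ball 0 R) isOpen_ball hgd hpos).mono
      (hgd.continuousOn.isOpen_inter_preimage isOpen_ball hQ) inter_subset_left,
    fun _ hz => hz.2⟩

lemma hasDerivAt_mul_comp_inv_mul {p : ℂ → ℂ} {u z p' : ℂ} (hu : u ≠ 0)
    (hp : HasDerivAt p p' (u⁻¹ * z)) : HasDerivAt (fun z => u * p (u⁻¹ * z)) p' z := by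
  have hinner : HasDerivAt (fun z => u⁻¹ * z) u⁻¹ z := by
    simpa using (hasDerivAt_id z).const_mul u⁻¹
  refine ((hp.comp z hinner).const_mul u).congr_deriv ?_
  rw [mul_comm p', mul_inv_cancel_left₀ hu]

lemma exists_finger_of_mem_sphere {u : ℂ} (hu : u ∈ sphere 0 1) {ℓ ρ η : ℝ} (hℓ : 0 < ℓ)
    (hρ : 0 < ρ) (hη : 0 < η) :
    ∃ R > 1, ∃ p : ℂ → ℂ, DifferentiableOn ℂ p (ball 0 R) ∧
      (∀ z ∈ ball 0 R, 0 < (deriv p z).re) ∧ p u = ℓ * u ∧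
      (∀ z ∈ closedBall 0 1, ∃ t ∈ Icc 0 ℓ, ‖p z - t * u‖ ≤ η) ∧
      ∀ z ∈ closedBall 0 1, ρ ≤ ‖z - u‖ → ‖p z‖ ≤ η := by
  obtain ⟨R, hR, p, hpd, hpos, hp1, hnear, hfar⟩ := exists_finger hℓ hρ hη
  have hu1 : ‖u‖ = 1 := mem_sphere_zero_iff_norm.1 hu
  have hu0 : u ≠ 0 := norm_ne_zero_iff.1 (hu1 ▸ one_ne_zero)
  have hmul : ∀ z, ‖u * z‖ = ‖z‖ := fun z => by rw [norm_mul, hu1, one_mul]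
  have hrot : ∀ z, ‖u⁻¹ * z‖ = ‖z‖ := fun z => by rw [← hmul, mul_inv_cancel_left₀ hu0]
  have hball : ∀ {z r}, z ∈ ball 0 r → u⁻¹ * z ∈ ball 0 r := fun hz => by
    rwa [mem_ball_zero_iff, hrot, ← mem_ball_zero_iff]
  have hclosedBall : ∀ {z r}, z ∈ closedBall 0 r → u⁻¹ * z ∈ closedBall 0 r := fun hz => by
    rwa [mem_closedBall_zero_iff, hrot, ← mem_closedBall_zero_iff]
  have hderiv : ∀ z ∈ ball 0 R,
      HasDerivAt (fun z => u * p (u⁻¹ * z)) (deriv p (u⁻¹ * z)) z := fun z hz =>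
    hasDerivAt_mul_comp_inv_mul hu0
      (hpd.differentiableAt (isOpen_ball.mem_nhds (hball hz))).hasDerivAt
  refine ⟨R, hR, fun z => u * p (u⁻¹ * z),
    fun z hz => (hderiv z hz).differentiableAt.differentiableWithinAt,
    fun z hz => (hderiv z hz).deriv ▸ hpos _ (hball hz), ?_, fun z hz => ?_, fun z hz hzρ => ?_⟩
  · simp only [inv_mul_cancel₀ hu0, hp1, mul_comm]
  · obtain ⟨t, ht, hzt⟩ := hnear _ (hclosedBall hz)
    exact ⟨t, ht, by rwa [mul_comm _ u, ← mul_sub, hmul]⟩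
  · rw [hmul]
    refine hfar _ (hclosedBall hz) (hzρ.trans_eq ?_)
    rw [← hrot (z - u), mul_sub, inv_mul_cancel₀ hu0]

lemma isCompact_segment {E : Type*} [AddCommGroup E] [Module ℝ E] [TopologicalSpace E]
    [IsTopologicalAddGroup E] [ContinuousSMul ℝ E] (x y : E) : IsCompact (segment ℝ x y) := by
  rw [segment_eq_image']
  exact isCompact_Icc.image (by fun_prop)

lemma exists_forall_add_mem_of_segment_subset {X E : Type*} [PseudoMetricSpace X]
    [NormedAddCommGroup E] [NormedSpace ℝ E] {C : Set X} {Q : Set E} {g : X → E} {u : X} {v : E}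
    (hC : IsCompact C) (hQ : IsOpen Q) (hg : ContinuousOn g C) (hgQ : MapsTo g C Q) (hu : u ∈ C)
    (hv : segment ℝ (g u) (g u + v) ⊆ Q) :
    ∃ κ > 0, ∃ ρ > 0, ∀ z ∈ C, ∀ w : E, (‖w‖ ≤ κ → g z + w ∈ Q) ∧
      (dist z u < ρ → ∀ t ∈ Icc (0 : ℝ) 1, ‖w - t • v‖ ≤ κ → g z + w ∈ Q) := by
  obtain ⟨κ, hκ, hκQ⟩ := ((hC.image_of_continuousOn hg).union
    (isCompact_segment _ _)).exists_cthickening_subset_open hQ (union_subset hgQ.image_subset hv)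
  have hmem : ∀ {w k}, k ∈ g '' C ∪ segment ℝ (g u) (g u + v) → ‖w - k‖ ≤ κ → w ∈ Q :=
    fun hk hw => hκQ (mem_cthickening_of_dist_le _ _ _ _ hk (by rwa [dist_eq_norm]))
  obtain ⟨ρ, hρ, hgρ⟩ := Metric.continuousOn_iff.1 hg u hu (κ / 2) (half_pos hκ)
  refine ⟨κ / 2, half_pos hκ, ρ, hρ, fun z hz w => ⟨fun hw => ?_, fun hzu t ht hw => ?_⟩⟩
  · refine hmem (Or.inl (mem_image_of_mem g hz)) ?_
    rw [add_sub_cancel_left]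
    linarith
  · refine hmem (k := g u + t • v) (Or.inr ?_) ?_
    · rw [segment_eq_image', add_sub_cancel_left]
      exact mem_image_of_mem _ ht
    · have hgz := hgρ z hz hzu
      rw [dist_eq_norm] at hgz
      rw [add_sub_add_comm]
      linarith [norm_add_le (g z - g u) (w - t • v)]

lemma exists_finger_add (hQ : IsOpen Q) (hQc : Convex ℝ Q) {g : ℂ → ℂ}
    (hg : g ∈ positiveDerivMaps Q) {u : ℂ} (hu : u ∈ sphere 0 1) {ℓ : ℝ} (hℓ : 0 < ℓ)
    (hq : g u + ℓ * u ∈ Q) {r η : ℝ} (hr : r < 1) (hη : 0 < η) :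
    ∃ g' ∈ positiveDerivMaps Q, (∀ z ∈ closedBall 0 r, ‖g' z - g z‖ ≤ η) ∧
      g' u = g u + ℓ * u := by
  obtain ⟨hgQ, R, hR, hgd, hgpos⟩ := hg
  have huB : u ∈ closedBall (0 : ℂ) 1 := sphere_subset_closedBall hu
  obtain ⟨κ, hκ, ρ, hρ, hmem⟩ := exists_forall_add_mem_of_segment_subset
    (isCompact_closedBall 0 1) hQ (hgd.continuousOn.mono (closedBall_subset_ball hR)) hgQ huB
    (hQc.segment_subset (hgQ huB) hq)
  obtain ⟨R', hR', p, hpd, hppos, hpu, hpnear, hpfar⟩ := exists_finger_of_mem_sphere hu hℓ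
    (lt_min hρ (sub_pos.2 hr)) (lt_min hκ hη)
  have hderiv : ∀ z ∈ ball 0 (min R R'),
      HasDerivAt (fun z => g z + p z) (deriv g z + deriv p z) z ∧
        0 < (deriv g z + deriv p z).re := fun z hz => by
    have hzR := ball_subset_ball (min_le_left _ _) hz
    have hzR' := ball_subset_ball (min_le_right _ _) hz
    exact ⟨(hgd.differentiableAt (isOpen_ball.mem_nhds hzR)).hasDerivAt.add
      (hpd.differentiableAt (isOpen_ball.mem_nhds hzR')).hasDerivAt,
      add_pos (hgpos z hzR) (hppos z hzR')⟩
  refine ⟨fun z => g z + p z, ⟨fun z hz => ?_, min R R', lt_min hR hR',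
    fun z hz => (hderiv z hz).1.differentiableAt.differentiableWithinAt,
    fun z hz => (hderiv z hz).1.deriv ▸ (hderiv z hz).2⟩, fun z hz => ?_,
    congrArg (g u + ·) hpu⟩
  · rcases lt_or_ge ‖z - u‖ ρ with hzu | hzu
    · obtain ⟨t, ht, hzt⟩ := hpnear z hz
      have htv : (t / ℓ) • (ℓ * u : ℂ) = t * u := by
        rw [Complex.real_smul, ← mul_assoc, ← Complex.ofReal_mul, div_mul_cancel₀ _ hℓ.ne']
      exact (hmem z hz _).2 (by rwa [dist_eq_norm]) (t / ℓ)
        ⟨div_nonneg ht.1 hℓ.le, div_le_one_of_le₀ ht.2 hℓ.le⟩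
        (htv ▸ hzt.trans (min_le_left _ _))
    · exact (hmem z hz _).1 ((hpfar z hz ((min_le_left _ _).trans hzu)).trans (min_le_left _ _))
  · rw [add_sub_cancel_left]
    have hz1 := closedBall_subset_closedBall hr.le hz
    refine (hpfar z hz1 ((min_le_right _ _).trans ?_)).trans (min_le_right _ _)
    linarith [norm_sub_norm_le u z, norm_sub_rev z u, mem_sphere_zero_iff_norm.1 hu,
      mem_closedBall_zero_iff.1 hz]

lemma isStretchable_positiveDerivMaps (hQ : IsOpen Q) (hQc : Convex ℝ Q) :
    IsStretchable (positiveDerivMaps Q) Q := by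
  refine ⟨fun g => exists_isBiholomorphicOn_of_mem_positiveDerivMaps hQ,
    fun g hg q hq r hr η hη => ?_⟩
  by_cases hmem : q ∈ g '' closedBall 0 1
  · obtain ⟨b, hb, rfl⟩ := hmem
    exact ⟨g, hg, fun z _ => by simpa using hη.le, b, hb, by simpa using hη.le⟩
  have hcont : ContinuousOn g (closedBall 0 1) :=
    let ⟨_, _, hR, hgd, _⟩ := hg
    hgd.continuousOn.mono (closedBall_subset_ball hR)
  obtain ⟨u, hu, ℓ, hℓ, huℓ⟩ := exists_mem_sphere_eq_mul (h := fun z => q - g z)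
    (continuousOn_const.sub hcont) fun z hz h => hmem ⟨z, hz, (sub_eq_zero.1 h).symm⟩
  have hqu : g u + ℓ * u = q := by rw [← huℓ, add_sub_cancel]
  obtain ⟨g', hg', hnear, hg'u⟩ := exists_finger_add hQ hQc hg hu hℓ (hqu ▸ hq) hr hη
  exact ⟨g', hg', hnear, u, sphere_subset_closedBall hu, by simpa [hg'u, hqu] using hη.le⟩

lemma positiveDerivMaps_nonempty (hQ : IsOpen Q) (hne : Q.Nonempty) :
    (positiveDerivMaps Q).Nonempty := by
  obtain ⟨x, hx⟩ := hne
  obtain ⟨ε, hε, hball⟩ := Metric.nhds_basis_closedBall.mem_iff.1 (hQ.mem_nhds hx)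
  have hderiv : ∀ z : ℂ, HasDerivAt (fun z : ℂ => x + ε * z) ε z := fun z => by
    simpa using ((hasDerivAt_id z).const_mul (ε : ℂ)).const_add x
  refine ⟨fun z => x + ε * z, fun z hz => hball ?_, 2, one_lt_two,
    fun z _ => (hderiv z).differentiableAt.differentiableWithinAt, fun z _ => ?_⟩
  · rw [mem_closedBall_iff_norm, add_sub_cancel_left, norm_mul, Complex.norm_real,
      Real.norm_of_nonneg hε.le]
    exact mul_le_of_le_one_right hε.le (mem_closedBall_zero_iff.1 hz)
  · simpa [(hderiv z).deriv] using hε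

theorem hasDenseBall_of_convex_plane (hQ : IsOpen Q) (hQc : Convex ℝ Q) (hne : Q.Nonempty) :
    HasDenseBall Q :=
  (isStretchable_positiveDerivMaps hQ hQc).hasDenseBall (positiveDerivMaps_nonempty hQ hne)

end Plane

section Transport

variable {E F : Type*} [NormedAddCommGroup E] [NormedSpace ℂ E] [NormedAddCommGroup F]
  [NormedSpace ℂ F]

lemma isBiholomorphicOn_continuousLinearEquiv (e : E ≃L[ℂ] F) {s : Set E} (hs : IsOpen s) :
    IsBiholomorphicOn e s where
  isOpen := hs
  differentiableOn := e.differentiableOn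
  isOpen_image := e.isOpenMap s hs
  exists_leftInvOn := ⟨e.symm, e.symm.differentiableOn, fun z _ => e.symm_apply_apply z⟩

lemma HasDenseBall.of_preimage (e : E ≃ₗᵢ[ℂ] F) {Q : Set F} (h : HasDenseBall (e ⁻¹' Q)) :
    HasDenseBall Q := by
  obtain ⟨g, hg, hgQ, hQg⟩ := h
  have himage : (e ∘ g ∘ e.symm) '' ball 0 1 = e '' (g '' ball 0 1) := by
    rw [image_comp, image_comp, e.symm.image_ball, map_zero]
  have hball : MapsTo e.symm (ball 0 1) (ball 0 1) := fun z hz => by simpa using hz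
  refine ⟨e ∘ g ∘ e.symm, ?_, ?_, ?_⟩
  · exact (isBiholomorphicOn_continuousLinearEquiv e.toContinuousLinearEquiv isOpen_univ).comp
      (hg.comp (isBiholomorphicOn_continuousLinearEquiv e.symm.toContinuousLinearEquiv isOpen_ball)
        hball) (mapsTo_univ _ _)
  · rw [himage, image_subset_iff]
    exact hgQ
  · rw [himage]
    refine fun q hq => image_closure_subset_closure_image e.continuous
      ⟨e.symm q, hQg (by simpa using hq), e.apply_symm_apply q⟩

end Transport

lemma hasDenseBall_of_convex_of_finrank_eq_one {E : Type*} [NormedAddCommGroup E]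
    [InnerProductSpace ℂ E] (hE : Module.finrank ℂ E = 1) {Q : Set E} (hQ : IsOpen Q)
    (hQc : Convex ℝ Q) (hne : Q.Nonempty) : HasDenseBall Q := by
  have : FiniteDimensional ℂ E := Module.finite_of_finrank_eq_succ hE
  let e : ℂ ≃ₗᵢ[ℂ] E := (stdOrthonormalBasis ℂ ℂ).equiv (stdOrthonormalBasis ℂ E)
    (finCongr (by rw [hE, Module.finrank_self]))
  refine HasDenseBall.of_preimage e (hasDenseBall_of_convex_plane
    (hQ.preimage e.continuous) (hQc.linear_preimage (e.toLinearEquiv.toLinearMap.restrictScalars ℝ))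
    (hne.preimage e.surjective))

/-! ### Tame maps and shears -/

section Tame

variable {E : Type*} [NormedAddCommGroup E] [NormedSpace ℂ E]

lemma isPreconnected_inter_of_dense {X : Type*} [TopologicalSpace X] {C N : Set X}
    (hC : IsPreconnected C) (hN : Dense N)
    (hloc : ∀ x ∈ C, ∃ V, IsOpen V ∧ x ∈ V ∧ V ⊆ C ∧ IsPreconnected (V ∩ N)) :
    IsPreconnected (C ∩ N) := by
  rw [isPreconnected_iff_subset_of_disjoint]
  intro u v hu hv huv hdisj
  have hdisj' : ∀ y ∈ C ∩ N, y ∈ u → y ∉ v := fun y hy hyu hyv =>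
    (hdisj ▸ (⟨hy, hyu, hyv⟩ : y ∈ C ∩ N ∩ (u ∩ v)) : y ∈ (∅ : Set X))
  let fill (w : Set X) : Set X := ⋃₀ {V | IsOpen V ∧ V ⊆ C ∧ V ∩ N ⊆ w}
  have hfill_open (w : Set X) : IsOpen (fill w) := isOpen_sUnion fun V hV => hV.1
  have hfill {w : Set X} {x : X} (hx : x ∈ fill w) (hxN : x ∈ N) : x ∈ w := by
    obtain ⟨V, hV, hxV⟩ := hx
    exact hV.2.2 ⟨hxV, hxN⟩
  have hcover : C ⊆ fill u ∪ fill v := by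
    intro x hx
    obtain ⟨V, hVo, hxV, hVC, hVN⟩ := hloc x hx
    have hsub : V ∩ N ⊆ C ∩ N := inter_subset_inter_left _ hVC
    refine (isPreconnected_iff_subset_of_disjoint.1 hVN u v hu hv (hsub.trans huv) ?_).imp
      (fun h => ⟨V, ⟨hVo, hVC, h⟩, hxV⟩) fun h => ⟨V, ⟨hVo, hVC, h⟩, hxV⟩
    exact eq_empty_of_forall_notMem fun y hy => hdisj' y (hsub hy.1) hy.2.1 hy.2.2
  by_contra! hcon
  simp only [not_subset] at hcon
  obtain ⟨⟨a, ha, hau⟩, b, hb, hbv⟩ := hcon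
  have hav : a ∈ fill v := (hcover ha.1).resolve_left fun h => hau (hfill h ha.2)
  have hbu : b ∈ fill u := (hcover hb.1).resolve_right fun h => hbv (hfill h hb.2)
  obtain ⟨x, -, hxu, hxv⟩ :=
    hC _ _ (hfill_open u) (hfill_open v) hcover ⟨b, hb.1, hbu⟩ ⟨a, ha.1, hav⟩
  obtain ⟨y, ⟨hyu, hyv⟩, hyN⟩ :=
    hN.inter_open_nonempty _ ((hfill_open u).inter (hfill_open v)) ⟨x, hxu, hxv⟩
  obtain ⟨V, hV, hyV⟩ := id hyu
  exact hdisj' y ⟨hV.2.1 hyV, hyN⟩ (hfill hyu hyN) (hfill hyv hyN)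

/-- The four half spaces `re l > re c`, `im l > im c`, `re l < re c`, `im l < im c` cover the
complement of the hyperplane, and consecutive ones meet in `s`, since `l` is open. -/
lemma isPreconnected_inter_hyperplane_compl_of_convex {s : Set E} (hs : IsOpen s)
    (hsc : Convex ℝ s) {l : E →L[ℂ] ℂ} (hl : l ≠ 0) (c : ℂ) :
    IsPreconnected (s ∩ {w | l w ≠ c}) := by
  by_cases hcs : c ∈ l '' s
  swap
  · have hsub : s ⊆ {w | l w ≠ c} := fun w hw hwc => hcs ⟨w, hw, hwc⟩
    rw [inter_eq_left.2 hsub]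
    exact hsc.isPreconnected
  have hmeet (d : ℂ) : ∃ ε > (0 : ℝ), ∃ w ∈ s, l w = c + ε * d := by
    have hnhds : l '' s ∈ 𝓝 (c + (0 : ℝ) * d) := by
      simpa using (l.isOpenMap_of_ne_zero hl s hs).mem_nhds hcs
    have hcont : ContinuousAt (fun ε : ℝ => c + ε * d) 0 := by fun_prop
    obtain ⟨ε, hεs, hε⟩ := (((hcont.eventually hnhds).filter_mono
      nhdsWithin_le_nhds).and (self_mem_nhdsWithin (s := Ioi 0))).exists
    exact ⟨ε, hε, hεs⟩
  have hre : IsLinearMap ℝ fun w => (l w).re := ⟨by simp, by simp⟩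
  have him : IsLinearMap ℝ fun w => (l w).im := ⟨by simp, by simp⟩
  have hcover : s ∩ {w | l w ≠ c} =
      ((s ∩ {w | c.re < (l w).re} ∪ s ∩ {w | c.im < (l w).im}) ∪ s ∩ {w | (l w).re < c.re}) ∪
        s ∩ {w | (l w).im < c.im} := by
    ext w
    simp only [mem_inter_iff, mem_union, mem_ofPred_eq, ne_eq, Complex.ext_iff]
    grind
  rw [hcover]
  obtain ⟨ε₁, hε₁, w₁, hw₁, hl₁⟩ := hmeet (1 + Complex.I)
  obtain ⟨ε₂, hε₂, w₂, hw₂, hl₂⟩ := hmeet (-1 + Complex.I)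
  obtain ⟨ε₃, hε₃, w₃, hw₃, hl₃⟩ := hmeet (-1 - Complex.I)
  refine (((hsc.inter (convex_halfSpace_gt hre _)).isPreconnected.union w₁ ?_ ?_
    (hsc.inter (convex_halfSpace_gt him _)).isPreconnected).union w₂ (.inr ?_) ?_
    (hsc.inter (convex_halfSpace_lt hre _)).isPreconnected).union w₃ (.inr ?_) ?_
    (hsc.inter (convex_halfSpace_lt him _)).isPreconnected
  all_goals simp [*]

lemma dense_hyperplane_compl {l : E →L[ℂ] ℂ} (hl : l ≠ 0) (c : ℂ) : Dense {w | l w ≠ c} :=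
  (dense_compl_singleton c).preimage (l.isOpenMap_of_ne_zero hl)

lemma isPreconnected_inter_hyperplane_compl {C : Set E} (hCo : IsOpen C) (hC : IsPreconnected C)
    {l : E →L[ℂ] ℂ} (hl : l ≠ 0) (c : ℂ) : IsPreconnected (C ∩ {w | l w ≠ c}) := by
  refine isPreconnected_inter_of_dense hC (dense_hyperplane_compl hl c) fun x hx => ?_
  obtain ⟨δ, hδ, hb⟩ := Metric.isOpen_iff.1 hCo x hx
  exact ⟨ball x δ, isOpen_ball, mem_ball_self hδ, hb,
    isPreconnected_inter_hyperplane_compl_of_convex isOpen_ball (convex_ball x δ) hl c⟩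

/-- The maps embedding an open connected neighbourhood of the closed unit ball biholomorphically
onto a dense open subset of `Q`. Keeping such a dense embedding at hand is what allows the image of
the ball to be stretched towards any point of `Q`. -/
def denseEmbeddings (Q : Set E) : Set (E → E) :=
  {g | ∃ D, IsPreconnected D ∧ closedBall 0 1 ⊆ D ∧ IsBiholomorphicOn g D ∧ MapsTo g D Q ∧
    Q ⊆ closure (g '' D)}

lemma comp_mem_denseEmbeddings {Q D : Set E} {g Θ : E → E} (hg : IsBiholomorphicOn g D)
    (hgQ : MapsTo g D Q) (hQ : Q ⊆ closure (g '' D)) (hΘ : Θ ∈ denseEmbeddings D) :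
    g ∘ Θ ∈ denseEmbeddings Q := by
  obtain ⟨D', hD', hball, hΘb, hΘD, hD⟩ := hΘ
  refine ⟨D', hD', hball, hg.comp hΘb hΘD, hgQ.comp hΘD, hQ.trans ?_⟩
  refine closure_minimal ?_ isClosed_closure
  rintro _ ⟨z, hz, rfl⟩
  rw [image_comp]
  exact mem_closure_image
    (hg.differentiableOn.continuousOn.continuousAt (hg.isOpen.mem_nhds hz)) (hD hz)

lemma denseEmbeddings_nonempty_of_convex {Q : Set E} (hQ : IsOpen Q) (hQc : Convex ℝ Q)
    (hne : Q.Nonempty) : (denseEmbeddings Q).Nonempty := by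
  obtain ⟨x, hx⟩ := hne
  obtain ⟨ε, hε, hεQ⟩ := nhds_basis_closedBall.mem_iff.1 (hQ.mem_nhds hx)
  have hε0 : (ε : ℂ) ≠ 0 := by exact_mod_cast hε.ne'
  let g : E ≃ₜ E := (Homeomorph.smulOfNeZero (ε : ℂ) hε0).trans (Homeomorph.addLeft x)
  have hg : Differentiable ℂ g :=
    (differentiable_const x).add (differentiable_id.const_smul (ε : ℂ))
  have hgs : Differentiable ℂ g.symm :=
    (differentiable_id.const_add (-x)).const_smul (ε : ℂ)⁻¹
  have himage : g '' (g ⁻¹' Q) = Q := g.surjective.image_preimage Q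
  refine ⟨g, g ⁻¹' Q, ?_, fun z hz => hεQ ?_, ⟨hQ.preimage g.continuous, hg.differentiableOn,
    himage.symm ▸ hQ, g.symm, hgs.differentiableOn, fun z _ => g.symm_apply_apply z⟩,
    mapsTo_preimage g Q, himage.symm ▸ subset_closure⟩
  · exact (g.isPreconnected_preimage).2 hQc.isPreconnected
  · change x + (ε : ℂ) • z ∈ closedBall x ε
    rw [mem_closedBall_zero_iff] at hz
    rw [mem_closedBall_iff_norm, add_sub_cancel_left, norm_smul, Complex.norm_of_nonneg hε.le]
    exact mul_le_of_le_one_right hε.le hz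

/-- A map `Θ` is tame if it is a dense embedding into *every* connected open set containing the
image of the closed unit ball. -/
def IsTame (Θ : E → E) : Prop :=
  ∀ C : Set E, IsOpen C → IsPreconnected C → MapsTo Θ (closedBall 0 1) C → Θ ∈ denseEmbeddings C

lemma isTame_id : IsTame (id : E → E) := fun C hCo hC hB =>
  ⟨C, hC, hB, ⟨hCo, differentiableOn_id, by simpa using hCo, id, differentiableOn_id,
    fun _ _ => rfl⟩, mapsTo_id C, by simpa using subset_closure⟩

/-- The shear `w ↦ w + χ (l w) • v` along the fibres of the functional `l`; it is used with
`l v = 0`, and then its inverse is the shear with `-χ`. -/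
noncomputable def shear (χ : ℂ → ℂ) (l : E →L[ℂ] ℂ) (v w : E) : E := w + χ (l w) • v

variable {χ : ℂ → ℂ} {l : E →L[ℂ] ℂ} {v : E}

lemma apply_shear (hv : l v = 0) (w : E) : l (shear χ l v w) = l w := by simp [shear, hv]

lemma shear_neg_shear (hv : l v = 0) (w : E) : shear (-χ) l v (shear χ l v w) = w := by
  simp [shear, hv]

lemma shear_shear_neg (hv : l v = 0) (w : E) : shear χ l v (shear (-χ) l v w) = w := by
  simp [shear, hv]

lemma differentiableOn_shear {V : Set ℂ} (hχ : DifferentiableOn ℂ χ V) :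
    DifferentiableOn ℂ (shear χ l v) (l ⁻¹' V) :=
  differentiableOn_id.add
    ((hχ.comp l.differentiable.differentiableOn (mapsTo_preimage l V)).smul_const v)

lemma image_shear_inter_preimage (hv : l v = 0) {V : Set ℂ} {C : Set E} :
    shear χ l v '' (l ⁻¹' V ∩ shear χ l v ⁻¹' C) = C ∩ l ⁻¹' V := by
  ext w
  refine ⟨?_, fun hw => ⟨shear (-χ) l v w, ⟨?_, ?_⟩, shear_shear_neg hv w⟩⟩
  · rintro ⟨z, ⟨hzV, hzC⟩, rfl⟩
    exact ⟨hzC, by rwa [mem_preimage, apply_shear hv]⟩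
  · rw [mem_preimage, apply_shear hv]
    exact hw.2
  · rw [mem_preimage, shear_shear_neg hv]
    exact hw.1

lemma isBiholomorphicOn_shear (hv : l v = 0) {V : Set ℂ} (hV : IsOpen V)
    (hχ : DifferentiableOn ℂ χ V) : IsBiholomorphicOn (shear χ l v) (l ⁻¹' V) := by
  have himage : shear χ l v '' (l ⁻¹' V) = l ⁻¹' V := by
    simpa using image_shear_inter_preimage (χ := χ) hv (V := V) (C := univ)
  refine ⟨hV.preimage l.continuous, differentiableOn_shear hχ, ?_, shear (-χ) l v, ?_,
    fun w _ => shear_neg_shear hv w⟩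
  · rw [himage]
    exact hV.preimage l.continuous
  · rw [himage]
    exact differentiableOn_shear hχ.neg

lemma IsTame.shear_comp {Θ : E → E} (hΘ : IsTame Θ) (hl : l ≠ 0) (hv : l v = 0) {c : ℂ}
    (hχ : DifferentiableOn ℂ χ {c}ᶜ) (havoid : ∀ z ∈ closedBall 0 1, l (Θ z) ≠ c) :
    IsTame (shear χ l v ∘ Θ) := by
  intro C hCo hC hB
  have hψ := isBiholomorphicOn_shear hv isOpen_compl_singleton hχ
  set D := l ⁻¹' {c}ᶜ ∩ shear χ l v ⁻¹' C
  have hDo : IsOpen D :=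
    hψ.differentiableOn.continuousOn.isOpen_inter_preimage hψ.isOpen hCo
  have himage : shear χ l v '' D = C ∩ l ⁻¹' {c}ᶜ := image_shear_inter_preimage hv
  have hD : D = shear (-χ) l v '' (C ∩ l ⁻¹' {c}ᶜ) := by
    rw [← himage, image_image]
    simp [shear_neg_shear hv]
  have hDc : IsPreconnected D := by
    rw [hD]
    exact (isPreconnected_inter_hyperplane_compl hCo hC hl c).image _
      ((differentiableOn_shear hχ.neg).continuousOn.mono inter_subset_right)
  refine comp_mem_denseEmbeddings (hψ.mono hDo inter_subset_left) (fun w hw => hw.2) ?_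
    (hΘ D hDo hDc fun z hz => ⟨havoid z hz, hB hz⟩)
  rw [himage]
  exact (dense_hyperplane_compl hl c).open_subset_closure_inter hCo

end Tame

/-! ### Stretching the ball along a segment -/

section Peak

lemma exists_differentiable_forall_norm_sub_le {f : ℂ → ℂ} {r R ε : ℝ}
    (hf : DifferentiableOn ℂ f (ball 0 R)) (hr : 0 ≤ r) (hrR : r < R) (hε : 0 < ε) :
    ∃ S : ℂ → ℂ, Differentiable ℂ S ∧ ∀ z ∈ closedBall 0 r, ‖S z - f z‖ ≤ ε := by
  obtain ⟨b, hrb, hbR⟩ := exists_between hrR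
  obtain ⟨a, hra, hab⟩ := exists_between hrb
  lift b to NNReal using hr.trans hrb.le
  lift a to NNReal using hr.trans hra.le
  have hseries := (hf.mono (closedBall_subset_ball hbR)).hasFPowerSeriesOnBall
    (show 0 < b by exact_mod_cast hr.trans_lt hrb)
  have hunif := hseries.tendstoUniformlyOn (r' := a) (by exact_mod_cast hab)
  obtain ⟨n, hn⟩ := (Metric.tendstoUniformlyOn_iff.1 hunif ε hε).exists
  refine ⟨(cauchyPowerSeries f 0 b).partialSum n, ?_, fun z hz => ?_⟩
  · unfold FormalMultilinearSeries.partialSum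
    simp only [FormalMultilinearSeries.apply_eq_pow_smul_coeff]
    fun_prop
  · rw [← dist_eq_norm, dist_comm]
    simpa using (hn z (closedBall_subset_ball hra hz)).le

lemma exists_entire_peak {ρ ε : ℝ} (hρ : 0 < ρ) (hε : 0 < ε) :
    ∃ S : ℂ → ℂ, Differentiable ℂ S ∧ S 1 = 1 ∧
      (∀ u ∈ closedBall 0 1, ∃ t ∈ Icc (0 : ℝ) 1, ‖S u - t‖ ≤ ε) ∧
      ∀ u ∈ closedBall 0 1, ρ ≤ ‖u - 1‖ → ‖S u‖ ≤ ε := by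
  obtain ⟨R, hR, p, hp, -, hp1, hseg, hfar⟩ :=
    exists_finger one_pos hρ (show 0 < ε / 3 by positivity)
  obtain ⟨S, hS, hSp⟩ :=
    exists_differentiable_forall_norm_sub_le hp zero_le_one hR (show 0 < ε / 3 by positivity)
  have hS1 : ‖S 1 - 1‖ ≤ ε / 3 := by simpa [hp1] using hSp 1 (by simp)
  have hnear (u : ℂ) (hu : u ∈ closedBall 0 1) (t : ℂ) (ht : ‖p u - t‖ ≤ ε / 3) :
      ‖S u - (S 1 - 1) - t‖ ≤ ε := by
    rw [show S u - (S 1 - 1) - t = (S u - p u) - (S 1 - 1) + (p u - t) by ring]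
    linarith [norm_add_le (S u - p u - (S 1 - 1)) (p u - t),
      norm_sub_le (S u - p u) (S 1 - 1), hSp u hu]
  refine ⟨fun u => S u - (S 1 - 1), hS.sub_const _, by ring, fun u hu => ?_, fun u hu hρu => ?_⟩
  · obtain ⟨t, ht, htu⟩ := hseg u hu
    exact ⟨t, ht, hnear u hu t htu⟩
  · simpa using hnear u hu 0 (by simpa using hfar u hu hρu)

end Peak

section Reach

variable {E : Type*} [NormedAddCommGroup E] [NormedSpace ℂ E]

lemma exists_forall_le_norm_sub {X : Type*} [PseudoMetricSpace X] {M : Set X} (hM : IsCompact M)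
    {f : X → ℂ} (hf : ContinuousOn f M) {p : X} (hfp : ∀ w ∈ M, w ≠ p → f w ≠ f p) {η : ℝ}
    (hη : 0 < η) : ∃ δ > 0, ∀ w ∈ M, η ≤ dist w p → δ ≤ ‖f w - f p‖ := by
  have hfar : IsCompact (M ∩ {w | η ≤ dist w p}) :=
    hM.inter_right (isClosed_le continuous_const (by fun_prop))
  obtain ⟨δ, hδ, hfδ⟩ := hfar.exists_forall_le'
    (((hf.mono inter_subset_left).sub continuousOn_const).norm) (a := 0) fun w hw => by
      refine norm_pos_iff.2 (sub_ne_zero.2 (hfp w hw.1 ?_))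
      rintro rfl
      exact hη.not_ge (by simpa using hw.2)
  exact ⟨δ, hδ, fun w hw hwp => hfδ w ⟨hw, hwp⟩⟩

/-- The functional `l` exposes the point `p` of `M` from `c`: among the values of `l` on `M`, that
at `p` is the only one nearest to `c`. -/
structure Exposes (l : E →L[ℂ] ℂ) (c : ℂ) (M : Set E) (p : E) : Prop where
  ne : l p ≠ c
  norm_lt : ∀ w ∈ M, w ≠ p → ‖l p - c‖ < ‖l w - c‖

variable {l : E →L[ℂ] ℂ} {c : ℂ} {M : Set E} {p : E}

lemma Exposes.norm_le (h : Exposes l c M p) {w : E} (hw : w ∈ M) : ‖l p - c‖ ≤ ‖l w - c‖ := by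
  rcases eq_or_ne w p with rfl | hwp
  · exact le_rfl
  · exact (h.norm_lt w hw hwp).le

lemma Exposes.ne_of_mem (h : Exposes l c M p) {w : E} (hw : w ∈ M) : l w ≠ c :=
  sub_ne_zero.1 (norm_pos_iff.1 ((norm_pos_iff.2 (sub_ne_zero.2 h.ne)).trans_le (h.norm_le hw)))

/-- The peak function is applied to `(l p - c) / (l w - c)`, which has modulus at most one for
`w ∈ M` and equals one only at `w = p`. -/
lemma Exposes.exists_peak (h : Exposes l c M p) (hM : IsCompact M) {η ε : ℝ} (hη : 0 < η)
    (hε : 0 < ε) : ∃ χ : ℂ → ℂ, DifferentiableOn ℂ χ {c}ᶜ ∧ χ (l p) = 1 ∧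
      (∀ w ∈ M, ∃ t ∈ Icc (0 : ℝ) 1, ‖χ (l w) - t‖ ≤ ε) ∧
      ∀ w ∈ M, η ≤ dist w p → ‖χ (l w)‖ ≤ ε := by
  have hpc : l p - c ≠ 0 := sub_ne_zero.2 h.ne
  set f : E → ℂ := fun w => (l p - c) / (l w - c)
  have hfp : f p = 1 := div_self hpc
  have hf : ContinuousOn f M :=
    continuousOn_const.div (by fun_prop) fun w hw => sub_ne_zero.2 (h.ne_of_mem hw)
  have hf1 (w : E) (hw : w ∈ M) : f w ∈ closedBall 0 1 := by
    rw [mem_closedBall_zero_iff, norm_div]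
    exact div_le_one_of_le₀ (h.norm_le hw) (norm_nonneg _)
  have hfne (w : E) (hw : w ∈ M) (hwp : w ≠ p) : f w ≠ f p := by
    rw [hfp, Ne, div_eq_one_iff_eq (sub_ne_zero.2 (h.ne_of_mem hw))]
    exact fun heq => (h.norm_lt w hw hwp).ne (by rw [heq])
  obtain ⟨δ, hδ, hfδ⟩ := exists_forall_le_norm_sub hM hf hfne hη
  obtain ⟨S, hS, hS1, hSseg, hSfar⟩ := exists_entire_peak hδ hε
  refine ⟨fun ζ => S ((l p - c) / (ζ - c)), ?_, ?_, fun w hw => hSseg _ (hf1 w hw),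
    fun w hw hwp => hSfar _ (hf1 w hw) (hfp ▸ hfδ w hw hwp)⟩
  · exact hS.comp_differentiableOn ((differentiableOn_const _).div (by fun_prop)
      fun ζ hζ => sub_ne_zero.2 hζ)
  · simp only [div_self hpc, hS1]

lemma Exposes.exists_shear (h : Exposes l c M p) (hM : IsCompact M) (v : E) {η : ℝ} (hη : 0 < η) :
    ∃ χ : ℂ → ℂ, DifferentiableOn ℂ χ {c}ᶜ ∧ χ (l p) = 1 ∧
      (∀ w ∈ M, shear χ l v w ∈ thickening η (M ∪ segment ℝ p (p + v))) ∧
      ∀ w ∈ M, η ≤ dist w p → ‖shear χ l v w - w‖ < η := by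
  obtain ⟨ε, hε, hεv⟩ := exists_pos_mul_lt (half_pos hη) ‖v‖
  obtain ⟨χ, hχ, hχp, hχseg, hχfar⟩ := h.exists_peak hM (half_pos hη) hε
  have hsmall {a : ℂ} (ha : ‖a‖ ≤ ε) : ‖a • v‖ < η / 2 := by
    rw [norm_smul, mul_comm]
    exact (mul_le_mul_of_nonneg_left ha (norm_nonneg v)).trans_lt hεv
  have hfar (w : E) (hw : w ∈ M) (hwp : η / 2 ≤ dist w p) : ‖shear χ l v w - w‖ < η / 2 := by
    rw [shear, add_sub_cancel_left]
    exact hsmall (hχfar w hw hwp)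
  refine ⟨χ, hχ, hχp, fun w hw => ?_, fun w hw hwp =>
    (hfar w hw (by linarith)).trans (half_lt_self hη)⟩
  rw [mem_thickening_iff]
  rcases le_or_gt (η / 2) (dist w p) with hwp | hwp
  · refine ⟨w, .inl hw, ?_⟩
    rw [dist_eq_norm]
    linarith [hfar w hw hwp]
  · obtain ⟨t, ht, hχt⟩ := hχseg w hw
    refine ⟨p + t • v, .inr (by rw [segment_eq_image']; exact ⟨t, ht, by simp⟩), ?_⟩
    rw [shear, dist_eq_norm, ← Complex.coe_smul,
      show w + χ (l w) • v - (p + (t : ℂ) • v) = (w - p) + (χ (l w) - t) • v by module]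
    rw [dist_eq_norm] at hwp
    linarith [norm_add_le (w - p) ((χ (l w) - t) • v), hsmall hχt]

/-- The closed unit ball can be mapped, by tame maps arbitrarily close to the identity on smaller
balls, into arbitrarily small neighbourhoods of `M` so that the image contains the point `p`. -/
def Reaches (M : Set E) (p : E) : Prop :=
  ∀ r < 1, ∀ η > 0, ∃ Θ : E → E, IsTame Θ ∧ MapsTo Θ (closedBall 0 1) (thickening η M) ∧
    (∀ z ∈ closedBall 0 r, ‖Θ z - z‖ < η) ∧ p ∈ Θ '' closedBall 0 1

lemma reaches_closedBall (hp : p ∈ closedBall 0 1) : Reaches (closedBall 0 1) p :=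
  fun _ _ η hη => ⟨id, isTame_id, fun _ hz => self_subset_thickening hη _ hz,
    fun z _ => by simpa using hη, p, hp, rfl⟩

lemma Reaches.add_segment (h : Reaches M p) (hM : IsCompact M) (hball : closedBall 0 1 ⊆ M)
    (hp : 1 ≤ ‖p‖) (hexp : Exposes l c M p) (hl : l ≠ 0) {v : E} (hv : l v = 0) :
    Reaches (M ∪ segment ℝ p (p + v)) (p + v) := by
  intro r hr η hη
  obtain ⟨η', hη', hη'2⟩ : ∃ η' > 0, η' < min (η / 2) (1 - r) :=
    exists_between (lt_min (half_pos hη) (by linarith))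
  obtain ⟨hη'η, hη'r⟩ := lt_min_iff.1 hη'2
  obtain ⟨χ, hχ, hχp, hχM, hχr⟩ := hexp.exists_shear hM v hη'
  have hψ := isBiholomorphicOn_shear hv isOpen_compl_singleton hχ
  have hψc : ContinuousOn (shear χ l v) (l ⁻¹' {c}ᶜ) := hψ.differentiableOn.continuousOn
  have hMc : M ⊆ l ⁻¹' {c}ᶜ := fun w hw => hexp.ne_of_mem hw
  obtain ⟨η₂, hη₂, hsub⟩ := hM.exists_thickening_subset_open
    (hψc.isOpen_inter_preimage hψ.isOpen isOpen_thickening) fun w hw => ⟨hMc hw, hχM w hw⟩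
  obtain ⟨η₃, hη₃, hclose⟩ := exists_pos_forall_dist_lt hM
    (fun w hw => hψc.continuousAt (hψ.isOpen.mem_nhds (hMc hw))) (half_pos hη)
  obtain ⟨Θ, hΘ, hΘM, hΘr, a, ha, rfl⟩ := h r hr (min η₂ η₃) (lt_min hη₂ hη₃)
  have hΘη₂ (z : E) (hz : z ∈ closedBall 0 1) := hsub (thickening_mono (min_le_left _ _) _ (hΘM hz))
  refine ⟨shear χ l v ∘ Θ, hΘ.shear_comp hl hv hχ fun z hz => (hΘη₂ z hz).1, fun z hz => ?_,
    fun z hz => ?_, a, ha, by simp [shear, hχp]⟩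
  · exact thickening_mono (by linarith) _ (hΘη₂ z hz).2
  · have hzr : ‖z‖ ≤ r := by simpa using hz
    have hzM : z ∈ M := hball (by simpa using hzr.trans hr.le)
    have hzp : η' ≤ dist z (Θ a) := by
      rw [dist_comm, dist_eq_norm]
      linarith [norm_sub_norm_le (Θ a) z]
    have hΘz := hclose z hzM (Θ z) (by
      rw [dist_eq_norm]
      exact (hΘr z hz).trans_le (min_le_right _ _))
    rw [dist_eq_norm] at hΘz
    have := norm_add_le (shear χ l v (Θ z) - shear χ l v z) (shear χ l v z - z)
    rw [sub_add_sub_cancel] at this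
    rw [Function.comp_apply]
    linarith [hχr z hzM hzp]

end Reach

/-! ### Growing trees -/

section Generic

variable {E : Type*} [NormedAddCommGroup E] [NormedSpace ℂ E]

/-- Through every point `t` outside the generic set `S` pass complex hyperplanes missing `S`, and
they can be chosen arbitrarily close to any given direction. -/
def IsGeneric (S : Set E) : Prop :=
  ∀ t ∉ S, Dense {l : E →L[ℂ] ℂ | ∀ w ∈ S, l w ≠ l t}

lemma isOpen_setOf_forall_apply_ne {S : Set E} (hS : IsCompact S) (t : E) :
    IsOpen {l : E →L[ℂ] ℂ | ∀ w ∈ S, l w ≠ l t} := by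
  rw [isOpen_iff_eventually]
  refine fun l hl => hS.eventually_forall_of_forall_eventually fun w hw => ?_
  have hcont : ContinuousAt (fun z : (E →L[ℂ] ℂ) × E => z.1 z.2 - z.1 t) (l, w) := by fun_prop
  filter_upwards [hcont.eventually_ne (sub_ne_zero.2 (hl w hw))] with z hz
  exact sub_ne_zero.1 hz

lemma isGeneric_empty : IsGeneric (∅ : Set E) := fun t _ => by simp

lemma IsGeneric.union {S S' : Set E} (h : IsGeneric S) (h' : IsGeneric S') (hS : IsCompact S) :
    IsGeneric (S ∪ S') := by
  intro t ht
  rw [mem_union, not_or] at ht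
  refine ((h t ht.1).inter_of_isOpen_left (h' t ht.2) (isOpen_setOf_forall_apply_ne hS t)).mono ?_
  exact fun l hl w hw => hw.elim (hl.1 w) (hl.2 w)

lemma dense_compl_image_Icc {f : ℝ → ℂ} {a b : ℝ} (hf : ContDiffOn ℝ 1 f (Icc a b)) :
    Dense (f '' Icc a b)ᶜ := by
  refine hf.dense_compl_image_of_dimH_lt_finrank (convex_Icc a b) le_rfl
    ((dimH_mono (subset_univ _)).trans_lt ?_)
  rw [Real.dimH_univ, Complex.finrank_real_complex]
  norm_num

/-- If `μ` separates `t` from the segment, then the numbers `τ` for which `l + τ • μ` takes the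
value at `t` also on the segment form a smooth arc in `ℂ`. -/
lemma isGeneric_segment (x y : E) : IsGeneric (segment ℝ x y) := by
  intro t ht
  obtain ⟨μ, u, hμ, hμt⟩ := RCLike.geometric_hahn_banach_closed_point (𝕜 := ℂ)
    (convex_segment x y) (isCompact_segment x y).isClosed ht
  have hne (w : E) (hw : w ∈ segment ℝ x y) : μ (w - t) ≠ 0 := fun h => by
    rw [map_sub, sub_eq_zero] at h
    exact ((hμ w hw).trans hμt).ne (by rw [h])
  set γ : ℝ → E := fun s => x + s • (y - x)
  have hγ : segment ℝ x y = γ '' Icc 0 1 := segment_eq_image' ℝ x y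
  have hsmooth (m : E →L[ℂ] ℂ) : ContDiff ℝ 1 fun s => m (γ s - t) :=
    (m.restrictScalars ℝ).contDiff.comp (by fun_prop)
  rw [Metric.dense_iff]
  intro l ε hε
  set f : ℝ → ℂ := fun s => -l (γ s - t) * (μ (γ s - t))⁻¹
  have hf : ContDiffOn ℝ 1 f (Icc 0 1) := by
    refine (hsmooth l).neg.contDiffOn.mul ((hsmooth μ).contDiffOn.inv fun s hs => ?_)
    exact hne _ (hγ ▸ mem_image_of_mem γ hs)
  obtain ⟨δ, hδ, hδε⟩ := exists_pos_mul_lt hε ‖μ‖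
  obtain ⟨τ, hτ, hτf⟩ := Metric.dense_iff.1 (dense_compl_image_Icc hf) 0 δ hδ
  refine ⟨l + τ • μ, ?_, fun w hw heq => hτf ?_⟩
  · rw [mem_ball, dist_eq_norm, add_sub_cancel_left, norm_smul, mul_comm]
    rw [mem_ball_zero_iff] at hτ
    exact (mul_le_mul_of_nonneg_left hτ.le (norm_nonneg μ)).trans_lt hδε
  · have hμw := hne w hw
    rw [hγ] at hw
    obtain ⟨s, hs, rfl⟩ := hw
    refine ⟨s, hs, ?_⟩
    rw [← sub_eq_zero, ← map_sub, add_apply, smul_apply, smul_eq_mul] at heq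
    simp only [f]
    rw [← div_eq_mul_inv, div_eq_iff hμw]
    linear_combination -heq

lemma isGeneric_singleton (x : E) : IsGeneric {x} := by
  simpa using isGeneric_segment x x

lemma apply_ne_of_norm_lt {l : E →L[ℂ] ℂ} {p w : E} (hl : ‖l‖ < ‖l p‖)
    (hw : w ∈ closedBall 0 1) : l w ≠ l p := by
  intro h
  rw [mem_closedBall_zero_iff] at hw
  rw [← h] at hl
  exact hl.not_ge (l.le_of_opNorm_le_of_le le_rfl hw |>.trans_eq (mul_one _))

/-- The value `c` lies slightly beyond `l t` on the line from `l x` to `l t`. -/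
lemma exists_exposes_segment {l : E →L[ℂ] ℂ} {K : Set E} {x t : E} (hK : IsCompact K)
    (hKt : ∀ w ∈ K, l w ≠ l t) (hxt : l x ≠ l t) : ∃ c, Exposes l c (K ∪ segment ℝ x t) t := by
  set d := l t - l x
  have hd : 0 < ‖d‖ := norm_pos_iff.2 (sub_ne_zero.2 hxt.symm)
  obtain ⟨δ, hδ, hKδ⟩ := hK.exists_forall_le' (f := fun w => ‖l w - l t‖) (by fun_prop) (a := 0)
    fun w hw => norm_pos_iff.2 (sub_ne_zero.2 (hKt w hw))
  obtain ⟨κ, hκ, hκδ⟩ := exists_pos_mul_lt hδ (2 * ‖d‖)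
  have hnorm {a : ℝ} (ha : 0 ≤ a) : ‖(a : ℂ) * d‖ = a * ‖d‖ := by
    rw [norm_mul, Complex.norm_of_nonneg ha]
  have hct : ‖l t - (l t + κ * d)‖ = κ * ‖d‖ := by
    rw [sub_add_cancel_left, norm_neg, hnorm hκ.le]
  refine ⟨l t + κ * d, fun h => ?_, ?_⟩
  · rw [← h, sub_self, norm_zero] at hct
    exact (mul_pos hκ hd).ne hct
  rw [hct]
  rintro w (hw | hw) hwt
  · have := norm_sub_norm_le (l w - l t) (κ * d)
    rw [hnorm hκ.le, sub_sub] at this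
    linarith [hKδ w hw]
  · rw [segment_eq_image'] at hw
    obtain ⟨s, hs, rfl⟩ := hw
    have hs1 : s < 1 := hs.2.lt_of_ne fun h => hwt (by simp [h])
    have heq : l (x + s • (t - x)) - (l t + κ * d) = -(((1 - s + κ : ℝ) : ℂ) * d) := by
      rw [← Complex.coe_smul, map_add, map_smul, map_sub, smul_eq_mul]
      push_cast
      ring
    rw [heq, norm_neg, hnorm (by linarith)]
    exact mul_lt_mul_of_pos_right (by linarith) hd

/-- For `z` near `(p, l)` the vector `v` is projected to the kernel of `z.2` along `z.1`. -/
lemma eventually_exists_segment_subset {C : Set E} (hC : IsOpen C) {p v : E} {l : E →L[ℂ] ℂ}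
    (hlp : l p ≠ 0) (hv0 : v ≠ 0) (hv : l v = 0) (hsub : segment ℝ p (p + v) ⊆ C)
    {U : Set E} (hU : U ∈ 𝓝 (p + v)) :
    ∀ᶠ z : E × (E →L[ℂ] ℂ) in 𝓝 (p, l),
      ∃ v' ≠ 0, z.2 v' = 0 ∧ segment ℝ z.1 (z.1 + v') ⊆ C ∧ z.1 + v' ∈ U := by
  set φ : E × (E →L[ℂ] ℂ) → E := fun z => v - (z.2 v / z.2 z.1) • z.1
  have hdiv : ContinuousAt (fun z : E × (E →L[ℂ] ℂ) => z.2 v / z.2 z.1) (p, l) :=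
    ContinuousAt.div (by fun_prop) (by fun_prop) hlp
  have hφ : ContinuousAt φ (p, l) := continuousAt_const.sub (hdiv.smul continuousAt_fst)
  have hφ0 : φ (p, l) = v := by simp [φ, hv]
  have hseg : ∀ᶠ z in 𝓝 (p, l), ∀ s ∈ Icc (0 : ℝ) 1, z.1 + s • φ z ∈ C := by
    refine isCompact_Icc.eventually_forall_of_forall_eventually fun s hs => ?_
    have hcont : ContinuousAt (fun a : (E × (E →L[ℂ] ℂ)) × ℝ => a.1.1 + a.2 • φ a.1)
        ((p, l), s) := by
      refine ContinuousAt.add (by fun_prop) (continuousAt_snd.smul ?_)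
      exact ContinuousAt.comp (g := φ) hφ continuousAt_fst
    refine hcont.eventually_mem (hC.mem_nhds (hsub ?_))
    rw [segment_eq_image', hφ0]
    exact ⟨s, hs, by simp⟩
  have hne : ∀ᶠ z in 𝓝 (p, l), φ z ≠ 0 := hφ.eventually_ne (by rwa [hφ0])
  have hmem : ∀ᶠ z in 𝓝 (p, l), z.1 + φ z ∈ U := by
    refine (continuousAt_fst.add hφ).eventually_mem ?_
    rwa [Pi.add_apply, hφ0]
  have hlz : ∀ᶠ z : E × (E →L[ℂ] ℂ) in 𝓝 (p, l), z.2 z.1 ≠ 0 :=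
    ContinuousAt.eventually_ne (by fun_prop) hlp
  filter_upwards [hseg, hne, hmem, hlz] with z hzseg hzne hzmem hlz
  refine ⟨φ z, hzne, ?_, ?_, hzmem⟩
  · simp only [φ, map_sub, map_smul, smul_eq_mul, div_mul_cancel₀ _ hlz, sub_self]
  · rw [segment_eq_image']
    rintro _ ⟨s, hs, rfl⟩
    simpa using hzseg s hs

lemma eventually_exists_norm_lt_apply_sub_eq_zero {l m : E →L[ℂ] ℂ} {p q : E} (hl : ‖l‖ < ‖l p‖)
    (hlq : l (q - p) = 0) (hm : m (q - p) ≠ 0) :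
    ∀ᶠ y in 𝓝 q, ∃ k : E →L[ℂ] ℂ, ‖k‖ < ‖k p‖ ∧ k (y - p) = 0 := by
  set k : E → E →L[ℂ] ℂ := fun y => l - (l (y - p) / m (y - p)) • m
  have hk : ContinuousAt k q := by
    have : ContinuousAt (fun y => l (y - p) / m (y - p)) q :=
      ContinuousAt.div (by fun_prop) (by fun_prop) hm
    exact continuousAt_const.sub (this.smul continuousAt_const)
  have hkq : k q = l := by ext w; simp [k, -map_sub, hlq]
  have hkp : ∀ᶠ y in 𝓝 q, ‖k y‖ < ‖k y p‖ :=
    hk.norm.eventually_lt (hk.clm_apply continuousAt_const).norm (by rwa [hkq])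
  have hmy : ∀ᶠ y in 𝓝 q, m (y - p) ≠ 0 := ContinuousAt.eventually_ne (by fun_prop) hm
  filter_upwards [hkp, hmy] with y hky hmy
  refine ⟨k y, hky, ?_⟩
  simp only [k, sub_apply, smul_apply, smul_eq_mul, div_mul_cancel₀ _ hmy, sub_self]

end Generic

section Grow

variable {E : Type*} [NormedAddCommGroup E] [NormedSpace ℂ E]

/-- A stage in the growth of a tree inside `C`: the closed unit ball, a generic compact set `S` and
a last branch from `x` to the tip `t` make up a set along which the ball can be stretched to reach
`t`. -/
structure Grown (C S : Set E) (x t : E) : Prop where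
  ne : x ≠ t
  isCompact : IsCompact S
  isGeneric : IsGeneric S
  notMem : t ∉ S
  subset : closedBall 0 1 ∪ S ∪ segment ℝ x t ⊆ C
  one_lt_norm : 1 < ‖t‖
  reaches : Reaches (closedBall 0 1 ∪ S ∪ segment ℝ x t) t

/-- The points of `C` reached by growing trees. -/
def tips (C : Set E) : Set E := {t | ∃ S x, Grown C S x t}

variable [ProperSpace E] {C S : Set E} {x t : E}

lemma Grown.add_segment (h : Grown C S x t) {l : E →L[ℂ] ℂ} (hl : ‖l‖ < ‖l t‖)
    (hS : ∀ w ∈ S ∪ {x}, l w ≠ l t) {v : E} (hv0 : v ≠ 0) (hv : l v = 0)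
    (hC : segment ℝ t (t + v) ⊆ C) : Grown C (S ∪ segment ℝ x t) t (t + v) := by
  have hltv : l (t + v) = l t := by rw [map_add, hv, add_zero]
  have hl0 : l ≠ 0 := by
    rintro rfl
    simp at hl
  have hcomp : IsCompact (closedBall (0 : E) 1 ∪ S) := (isCompact_closedBall _ _).union h.isCompact
  obtain ⟨c, hexp⟩ := exists_exposes_segment hcomp
    (fun w hw => hw.elim (apply_ne_of_norm_lt hl) fun hwS => hS w (.inl hwS)) (hS x (.inr rfl))
  have hreach := h.reaches.add_segment (hcomp.union (isCompact_segment x t))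
    (fun z hz => .inl (.inl hz)) h.one_lt_norm.le hexp hl0 hv
  refine ⟨by simpa using hv0, h.isCompact.union (isCompact_segment x t),
    h.isGeneric.union (isGeneric_segment x t) h.isCompact, ?_, ?_, ?_, ?_⟩
  · rintro (htS | htx)
    · exact hS _ (.inl htS) hltv
    · have := hexp.norm_lt _ (.inr htx) (by simpa using hv0)
      rw [hltv] at this
      exact this.false
  · rw [← union_assoc]
    exact union_subset h.subset hC
  · by_contra hle
    exact apply_ne_of_norm_lt hl (mem_closedBall_zero_iff.2 (not_lt.1 hle)) hltv
  · rwa [← union_assoc]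

/-- A tip near `p` is moved inside a generic hyperplane close to the kernel of `l`. -/
lemma add_mem_closure_tips (hC : IsOpen C) {p v : E} (hp : p ∈ closure (tips C)) {l : E →L[ℂ] ℂ}
    (hl : ‖l‖ < ‖l p‖) (hv : l v = 0) (hsub : segment ℝ p (p + v) ⊆ C) :
    p + v ∈ closure (tips C) := by
  rcases eq_or_ne v 0 with rfl | hv0
  · simpa using hp
  have hlp : l p ≠ 0 := norm_pos_iff.1 ((norm_nonneg l).trans_lt hl)
  have hnorm : ∀ᶠ z : E × (E →L[ℂ] ℂ) in 𝓝 (p, l), ‖z.2‖ < ‖z.2 z.1‖ :=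
    ContinuousAt.eventually_lt (by fun_prop) (by fun_prop) hl
  rw [mem_closure_iff_nhds]
  intro U hU
  have hev := hnorm.and (eventually_exists_segment_subset hC hlp hv0 hv hsub hU)
  rw [nhds_prod_eq] at hev
  obtain ⟨p', ⟨S, x, hp'⟩, hev'⟩ :=
    ((mem_closure_iff_frequently.1 hp).and_eventually hev.curry).exists
  have hp'S : p' ∉ S ∪ {x} := by
    rintro (h | h)
    exacts [hp'.notMem h, hp'.ne (mem_singleton_iff.1 h).symm]
  have hdense := hp'.isGeneric.union (isGeneric_singleton x) hp'.isCompact p' hp'S l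
  obtain ⟨l', hl', hnorm', v', hv'0, hv', hseg', hmem'⟩ :=
    ((mem_closure_iff_frequently.1 hdense).and_eventually hev').exists
  exact ⟨p' + v', hmem', _, _, hp'.add_segment hnorm' hl' hv'0 hv' hseg'⟩

end Grow

/-! ### Dense balls in convex domains -/

section Spread

variable {E : Type*} [NormedAddCommGroup E] [InnerProductSpace ℂ E]

lemma exists_norm_eq_inner_eq_zero (hE : 2 ≤ Module.finrank ℂ E) (u : E) {r : ℝ} (hr : 0 ≤ r) :
    ∃ e : E, ‖e‖ = r ∧ inner ℂ u e = 0 := by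
  have hfin : FiniteDimensional ℂ E := .of_finrank_pos (by lia)
  have hker : (innerSL ℂ u : E →ₗ[ℂ] ℂ).ker ≠ ⊥ :=
    LinearMap.ker_ne_bot_of_finrank_lt (by rw [Module.finrank_self]; lia)
  obtain ⟨e, he, he0⟩ := Submodule.exists_mem_ne_zero_of_ne_bot hker
  have hue : inner ℂ u e = 0 := he
  refine ⟨((r / ‖e‖ : ℝ) : ℂ) • e, ?_, by rw [inner_smul_right, hue, mul_zero]⟩
  rw [norm_smul, Complex.norm_of_nonneg (by positivity), div_mul_cancel₀ _ (norm_ne_zero_iff.2 he0)]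

lemma exists_norm_eq_one_inner_eq_one (hE : 2 ≤ Module.finrank ℂ E) {t : E} (ht : 1 ≤ ‖t‖) :
    ∃ x : E, ‖x‖ = 1 ∧ inner ℂ x t = 1 := by
  have ht0 : ‖t‖ ≠ 0 := by positivity
  have hb : 0 ≤ 1 - ‖t‖⁻¹ ^ 2 :=
    sub_nonneg.2 (pow_le_one₀ (by positivity) (inv_le_one_of_one_le₀ ht))
  obtain ⟨e, he, hte⟩ := exists_norm_eq_inner_eq_zero hE t (Real.sqrt_nonneg (1 - ‖t‖⁻¹ ^ 2))
  set y : E := ((‖t‖⁻¹ ^ 2 : ℝ) : ℂ) • t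
  have hy : ‖y‖ = ‖t‖⁻¹ := by
    rw [norm_smul, Complex.norm_of_nonneg (by positivity)]
    field_simp
  have hye : inner ℂ y e = 0 := by rw [inner_smul_left, hte, mul_zero]
  refine ⟨y + e, ?_, ?_⟩
  · rw [← sq_eq_sq₀ (norm_nonneg _) zero_le_one, pow_two,
      norm_add_sq_eq_norm_sq_add_norm_sq_of_inner_eq_zero y e hye, ← pow_two, ← pow_two, hy, he,
      Real.sq_sqrt hb]
    ring
  · have htt : inner ℂ t t = ((‖t‖ ^ 2 : ℝ) : ℂ) := by
      rw [inner_self_eq_norm_sq_to_K, Complex.ofReal_pow]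
      rfl
    rw [inner_add_left, inner_eq_zero_symm.1 hte, add_zero, inner_smul_left, Complex.conj_ofReal,
      htt, ← Complex.ofReal_mul, ← mul_pow, inv_mul_cancel₀ ht0, one_pow, Complex.ofReal_one]

lemma exposes_closedBall {x : E} (hx : ‖x‖ = 1) : Exposes (innerSL ℂ x) 2 (closedBall 0 1) x := by
  have hxx : innerSL ℂ x x = 1 := by simp [inner_self_eq_norm_sq_to_K, hx]
  refine ⟨by rw [hxx]; norm_num, fun w hw hwx => ?_⟩
  rw [mem_closedBall_zero_iff] at hw
  have hre : (inner ℂ x w).re < 1 := by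
    have hpos : 0 < ‖x - w‖ := norm_pos_iff.2 (sub_ne_zero.2 hwx.symm)
    have hsq := norm_sub_sq (𝕜 := ℂ) x w
    rw [hx, RCLike.re_eq_complex_re] at hsq
    nlinarith [norm_nonneg w]
  calc ‖innerSL ℂ x x - 2‖ = 1 := by rw [hxx]; norm_num
    _ < -(inner ℂ x w - 2).re := by rw [Complex.sub_re, Complex.re_ofNat]; linarith
    _ ≤ ‖innerSL ℂ x w - 2‖ := (neg_le_abs _).trans (Complex.abs_re_le_norm _)

variable [FiniteDimensional ℂ E] {C : Set E}

/-- The tip is reached by a segment tangent to the unit sphere. -/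
lemma mem_tips_of_mem_ball (hE : 2 ≤ Module.finrank ℂ E) {r : ℝ} (hC : ball 0 r ⊆ C) {t : E}
    (ht : 1 < ‖t‖) (htr : ‖t‖ < r) : t ∈ tips C := by
  have : ProperSpace E := FiniteDimensional.proper ℂ E
  obtain ⟨x, hx, hxt⟩ := exists_norm_eq_one_inner_eq_one hE ht.le
  have hxx : inner ℂ x x = 1 := by simp [inner_self_eq_norm_sq_to_K, hx]
  have hxball : x ∈ closedBall 0 1 := mem_closedBall_zero_iff.2 hx.le
  have hl : innerSL ℂ x ≠ 0 := by
    rw [← norm_ne_zero_iff, innerSL_apply_norm, hx]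
    exact one_ne_zero
  have hreach := (reaches_closedBall hxball).add_segment (isCompact_closedBall 0 1) subset_rfl
    hx.ge (exposes_closedBall hx) hl (v := t - x) (by
      rw [map_sub, innerSL_apply_apply, innerSL_apply_apply, hxt, hxx, sub_self])
  rw [add_sub_cancel] at hreach
  refine ⟨∅, x, fun h => ?_, isCompact_empty, isGeneric_empty, notMem_empty t, ?_, ht, ?_⟩
  · rw [← h, hx] at ht
    exact ht.false
  · rw [union_empty]
    refine (union_subset (closedBall_subset_ball (ht.trans htr)) ?_).trans hC
    refine (convex_ball 0 r).segment_subset ?_ (mem_ball_zero_iff.2 htr)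
    rw [mem_ball_zero_iff, hx]
    exact ht.trans htr
  · rwa [union_empty]

/-- The point `q` is left in a direction `-e` orthogonal to it; every point near `q` is then reached
by a second segment inside a hyperplane which is almost orthogonal to `q`. -/
lemma closure_tips_mem_nhds (hE : 2 ≤ Module.finrank ℂ E) (hC : IsOpen C) {q : E} (hqC : q ∈ C)
    (hq : 1 < ‖q‖) (hqt : q ∈ closure (tips C)) : closure (tips C) ∈ 𝓝 q := by
  have : ProperSpace E := FiniteDimensional.proper ℂ E
  obtain ⟨R, hR, hRC⟩ := Metric.isOpen_iff.1 hC q hqC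
  obtain ⟨e, he, hqe⟩ := exists_norm_eq_inner_eq_zero hE q (half_pos hR).le
  have hseg {x y : E} (hx : x ∈ ball q R) (hy : y ∈ ball q R) : segment ℝ x y ⊆ C :=
    ((convex_ball q R).segment_subset hx hy).trans hRC
  set l : E →L[ℂ] ℂ := innerSL ℂ q
  have hle : l e = 0 := hqe
  have hl : ‖l‖ < ‖l q‖ := by
    rw [innerSL_apply_norm, innerSL_apply_apply, ← inner_self_re_eq_norm, inner_self_eq_norm_sq]
    nlinarith
  have hp : q - e ∈ ball q R := by
    rw [mem_ball_iff_norm, sub_sub_cancel_left, norm_neg, he]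
    exact half_lt_self hR
  have hpt : q - e ∈ closure (tips C) := by
    rw [sub_eq_add_neg]
    refine add_mem_closure_tips hC hqt hl (by rw [map_neg, hle, neg_zero]) ?_
    exact hseg (mem_ball_self hR) (by rwa [← sub_eq_add_neg])
  have hme : innerSL ℂ e (q - (q - e)) ≠ 0 := by
    rw [sub_sub_cancel, innerSL_apply_apply, inner_self_ne_zero, ← norm_pos_iff, he]
    exact half_pos hR
  have hk := eventually_exists_norm_lt_apply_sub_eq_zero (p := q - e)
    (by rwa [map_sub, hle, sub_zero]) (by rwa [sub_sub_cancel]) hme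
  filter_upwards [hk, ball_mem_nhds q hR] with y ⟨k, hkp, hky⟩ hy
  rw [← add_sub_cancel (q - e) y]
  exact add_mem_closure_tips hC hpt hkp hky (by rw [add_sub_cancel]; exact hseg hp hy)

lemma subset_closure_tips (hE : 2 ≤ Module.finrank ℂ E) (hC : IsOpen C) (hCc : IsPreconnected C)
    (hball : closedBall 0 1 ⊆ C) : C ⊆ closure (tips C) ∪ closedBall 0 1 := by
  have : ProperSpace E := FiniteDimensional.proper ℂ E
  obtain ⟨δ, hδ, hδC⟩ := (isCompact_closedBall (0 : E) 1).exists_thickening_subset_open hC hball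
  rw [thickening_closedBall hδ zero_le_one] at hδC
  set A := closure (tips C) ∪ closedBall 0 1
  have hA : IsClosed A := isClosed_closure.union isClosed_closedBall
  have hδA : ball 0 (δ + 1) ⊆ A := fun t ht => by
    rw [mem_ball_zero_iff] at ht
    refine (lt_or_ge 1 ‖t‖).imp (fun h => ?_) mem_closedBall_zero_iff.2
    exact subset_closure (mem_tips_of_mem_ball hE hδC h ht)
  have hnear {q : E} (hq : ‖q‖ ≤ 1) : q ∈ interior A :=
    interior_maximal hδA isOpen_ball (mem_ball_zero_iff.2 (by linarith))
  refine (hCc.subset_of_closure_inter_subset isOpen_interior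
    ⟨0, hball (by simp), hnear (by simp)⟩ ?_).trans interior_subset
  rintro q ⟨hqA, hqC⟩
  rcases le_or_gt ‖q‖ 1 with hq | hq
  · exact hnear hq
  rcases closure_minimal interior_subset hA hqA with hqt | hqt
  · exact mem_interior_iff_mem_nhds.2
      (mem_of_superset (closure_tips_mem_nhds hE hC hqC hq hqt) subset_union_left)
  · exact absurd (mem_closedBall_zero_iff.1 hqt) hq.not_ge

lemma exists_isTame_near (hE : 2 ≤ Module.finrank ℂ E) (hC : IsOpen C) (hCc : IsPreconnected C)
    (hball : closedBall 0 1 ⊆ C) {q : E} (hq : q ∈ C) {r η : ℝ} (hr : r < 1) (hη : 0 < η) :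
    ∃ Θ : E → E, IsTame Θ ∧ MapsTo Θ (closedBall 0 1) C ∧ (∀ z ∈ closedBall 0 r, ‖Θ z - z‖ < η) ∧
      ∃ a ∈ closedBall 0 1, dist (Θ a) q < η := by
  have : ProperSpace E := FiniteDimensional.proper ℂ E
  rcases subset_closure_tips hE hC hCc hball hq with hqt | hqb
  · obtain ⟨t, ⟨S, x, ht⟩, hqt⟩ := Metric.mem_closure_iff.1 hqt η hη
    have hM : IsCompact (closedBall 0 1 ∪ S ∪ segment ℝ x t) :=
      ((isCompact_closedBall _ _).union ht.isCompact).union (isCompact_segment x t)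
    obtain ⟨δ, hδ, hδC⟩ := hM.exists_thickening_subset_open hC ht.subset
    obtain ⟨Θ, hΘ, hΘM, hΘr, a, ha, rfl⟩ := ht.reaches r hr (min η δ) (lt_min hη hδ)
    refine ⟨Θ, hΘ, hΘM.mono_right ((thickening_mono (min_le_right _ _) _).trans hδC),
      fun z hz => (hΘr z hz).trans_le (min_le_left _ _), a, ha, ?_⟩
    rwa [dist_comm]
  · exact ⟨id, isTame_id, hball, by simpa using fun _ _ => hη, q, hqb, by simpa using hη⟩

/-- Every dense embedding is stretched by composing it with a tame map of its domain. -/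
lemma isStretchable_denseEmbeddings (hE : 2 ≤ Module.finrank ℂ E) (Q : Set E) :
    IsStretchable (denseEmbeddings Q) Q := by
  have : ProperSpace E := FiniteDimensional.proper ℂ E
  refine ⟨fun g ⟨D, _, hball, hg, hgQ, _⟩ => ⟨D, hball, hg, hgQ⟩, ?_⟩
  rintro g ⟨D, hD, hball, hg, hgQ, hQ⟩ q hq r hr η hη
  have hcont {z : E} (hz : z ∈ D) : ContinuousAt g z :=
    hg.differentiableOn.continuousOn.continuousAt (hg.isOpen.mem_nhds hz)
  obtain ⟨_, ⟨y, hy, rfl⟩, hqy⟩ := Metric.mem_closure_iff.1 (hQ hq) (η / 2) (half_pos hη)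
  obtain ⟨δ₁, hδ₁, hgy⟩ := Metric.continuousAt_iff.1 (hcont hy) (η / 2) (half_pos hη)
  obtain ⟨δ₂, hδ₂, hgz⟩ := exists_pos_forall_dist_lt (isCompact_closedBall (0 : E) 1)
    (fun z hz => hcont (hball hz)) hη
  obtain ⟨Θ, hΘ, hΘD, hΘr, a, ha, hay⟩ :=
    exists_isTame_near hE hg.isOpen hD hball hy hr (lt_min hδ₁ hδ₂)
  refine ⟨g ∘ Θ, comp_mem_denseEmbeddings hg hgQ hQ (hΘ D hg.isOpen hD hΘD), fun z hz => ?_,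
    a, ha, ?_⟩
  · rw [← dist_eq_norm]
    refine (hgz z (closedBall_subset_closedBall hr.le hz) _ ?_).le
    rw [dist_eq_norm]
    exact (hΘr z hz).trans_le (min_le_right _ _)
  · rw [← dist_eq_norm]
    have := hgy (hay.trans_le (min_le_left _ _))
    rw [dist_comm] at hqy
    exact (dist_triangle _ (g y) _).trans (by simp only [Function.comp_apply]; linarith)

theorem hasDenseBall_of_convex {Q : Set E} (hQ : IsOpen Q) (hQc : Convex ℝ Q)
    (hne : Q.Nonempty) : HasDenseBall Q := by
  have : ProperSpace E := FiniteDimensional.proper ℂ E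
  rcases lt_or_ge (Module.finrank ℂ E) 2 with hE | hE
  · interval_cases h : Module.finrank ℂ E
    · have : Subsingleton E := Module.finrank_zero_iff.1 h
      refine ⟨id, isBiholomorphicOn_continuousLinearEquiv (.refl ℂ E) isOpen_ball, ?_, ?_⟩
      · exact fun z _ => Subsingleton.elim hne.some z ▸ hne.some_mem
      · exact fun z _ => subset_closure ⟨0, mem_ball_self one_pos, Subsingleton.elim _ _⟩
    · exact hasDenseBall_of_convex_of_finrank_eq_one h hQ hQc hne
  · exact (isStretchable_denseEmbeddings hE Q).hasDenseBall
      (denseEmbeddings_nonempty_of_convex hQ hQc hne)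

end Spread

/-! ### Dense orbits of expanding maps -/

section Expanding

variable {X : Type*}

lemma exists_forall_mem_of_subset_closure [TopologicalSpace X] [BaireSpace X] {ι : Type*}
    [Countable ι] {T : Set X} (hT : IsOpen T) (hne : T.Nonempty) {W : ι → Set X}
    (hW : ∀ i, IsOpen (W i)) (hTW : ∀ i, T ⊆ closure (W i)) : ∃ z ∈ T, ∀ i, z ∈ W i := by
  have hdense : Dense (⋂ i, W i ∪ (closure T)ᶜ) := by
    refine dense_iInter_of_isOpen (fun i => (hW i).union isClosed_closure.isOpen_compl)
      fun i x => ?_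
    by_cases hx : x ∈ closure T
    · exact closure_mono subset_union_left (closure_minimal (hTW i) isClosed_closure hx)
    · exact subset_closure (.inr hx)
  obtain ⟨z, hzT, hz⟩ := hdense.inter_open_nonempty T hT hne
  exact ⟨z, hzT, fun i => (mem_iInter.1 hz i).resolve_right fun h => h (subset_closure hzT)⟩

variable [PseudoMetricSpace X] {f : X → X} {T : Set X} {c : ℝ}

/-- The map `f` is expanding on `T` with rate `c⁻¹` in the sense that the preimage of every open
subset of `T` which is `δ`-dense in `T` contains one which is `c * δ`-dense in `T`. The preimage
itself need not be open, since `f` is not assumed to be continuous. -/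
def IsExpandingOn (f : X → X) (T : Set X) (c : ℝ) : Prop :=
  ∀ A ⊆ T, IsOpen A → ∀ δ > 0, T ⊆ thickening δ A →
    ∃ B ⊆ T, IsOpen B ∧ MapsTo f B A ∧ T ⊆ thickening (c * δ) B

lemma IsExpandingOn.iterate (h : IsExpandingOn f T c) (hc : 0 < c) (n : ℕ) :
    IsExpandingOn f^[n] T (c ^ n) := by
  intro A hAT hA δ hδ hTA
  induction n with
  | zero => exact ⟨A, hAT, hA, mapsTo_id A, by simpa using hTA⟩
  | succ n ih =>
    obtain ⟨B, hBT, hB, hfB, hTB⟩ := ih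
    obtain ⟨B', hBT', hB', hfB', hTB'⟩ := h B hBT hB (c ^ n * δ) (by positivity) hTB
    exact ⟨B', hBT', hB', hfB.comp hfB', by rwa [pow_succ', mul_assoc]⟩

lemma IsExpandingOn.subset_thickening_interior_preimage (h : IsExpandingOn f T c) (hc : 0 < c)
    {A : Set X} (hAT : A ⊆ T) (hA : IsOpen A) {δ : ℝ} (hδ : 0 < δ) (hTA : T ⊆ thickening δ A)
    (n : ℕ) : T ⊆ thickening (c ^ n * δ) (interior (f^[n] ⁻¹' A)) := by
  obtain ⟨B, -, hB, hfB, hTB⟩ := h.iterate hc n A hAT hA δ hδ hTA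
  exact hTB.trans (thickening_subset_of_subset _ (interior_maximal hfB hB))

theorem IsExpandingOn.exists_dense_orbit [BaireSpace X] [SecondCountableTopology X]
    (h : IsExpandingOn f T c) (hc : 0 < c) (hc1 : c < 1) (hT : IsOpen T)
    (hTb : Bornology.IsBounded T) (hne : T.Nonempty) {U : Set X} (hU : IsOpen U) (hUT : U ⊆ T)
    (hTU : T ⊆ closure U) :
    ∃ z, (∀ n, f^[n] z ∈ U) ∧ T ⊆ closure (range fun n => f^[n] z) := by
  let 𝓑 := {b ∈ TopologicalSpace.countableBasis X | (b ∩ T).Nonempty}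
  have : Countable 𝓑 :=
    ((TopologicalSpace.countable_countableBasis X).mono (sep_subset _ _)).to_subtype
  let W : ℕ ⊕ 𝓑 → Set X :=
    Sum.elim (fun n => interior (f^[n] ⁻¹' U)) fun b => ⋃ n, interior (f^[n] ⁻¹' (b ∩ T))
  have hW : ∀ i, IsOpen (W i) := by
    rintro (n | b)
    exacts [isOpen_interior, isOpen_iUnion fun n => isOpen_interior]
  have hTW : ∀ i, T ⊆ closure (W i) := by
    intro i
    rw [closure_eq_iInter_thickening, subset_iInter₂_iff]
    intro ε hε
    rcases i with n | ⟨b, hb, y, hyb, hyT⟩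
    · refine (h.subset_thickening_interior_preimage hc hUT hU hε
        (hTU.trans (closure_subset_thickening hε U)) n).trans (thickening_mono ?_ _)
      exact mul_le_of_le_one_left hε.le (pow_le_one₀ hc.le hc1.le)
    · obtain ⟨R, hR, hTR⟩ := hTb.subset_ball_lt 0 y
      obtain ⟨n, hn⟩ := exists_pow_lt_of_lt_one (div_pos hε hR) hc1
      have hnear : T ⊆ thickening R (b ∩ T) := fun x hx =>
        mem_thickening_iff.2 ⟨y, ⟨hyb, hyT⟩, hTR hx⟩
      refine (h.subset_thickening_interior_preimage hc inter_subset_right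
        ((TopologicalSpace.isOpen_of_mem_countableBasis hb).inter hT) hR hnear n).trans ?_
      refine (thickening_mono ((lt_div_iff₀ hR).1 hn).le _).trans ?_
      exact thickening_subset_of_subset _
        (subset_iUnion (fun n => interior (f^[n] ⁻¹' (b ∩ T))) n)
  obtain ⟨z, -, hz⟩ := exists_forall_mem_of_subset_closure hT hne hW hTW
  refine ⟨z, fun n => interior_subset (s := f^[n] ⁻¹' U) (hz (.inl n)), fun x hx => ?_⟩
  rw [(TopologicalSpace.isBasis_countableBasis X).mem_closure_iff]
  intro b hb hxb
  obtain ⟨n, hn⟩ := mem_iUnion.1 (hz (.inr ⟨b, hb, x, hxb, hx⟩))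
  exact ⟨f^[n] z, (interior_subset hn).1, n, rfl⟩

end Expanding

/-! ### The tile -/

section Square

lemma sqrt_sq_of_re_pos {z : ℂ} (hz : 0 < z.re) : Complex.sqrt (z ^ 2) = z :=
  Complex.sq_cpow_two_inv hz

lemma sq_sqrt (w : ℂ) : Complex.sqrt w ^ 2 = w := Complex.cpow_ofNat_inv_pow w 2

lemma sq_mem_slitPlane {z : ℂ} (hz : 0 < z.re) : z ^ 2 ∈ Complex.slitPlane := by
  rw [Complex.mem_slitPlane_iff, pow_two, Complex.mul_re, Complex.mul_im]
  by_cases h : z.im = 0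
  · left
    rw [h]
    nlinarith
  · right
    have : z.re * z.im ≠ 0 := mul_ne_zero hz.ne' h
    contrapose! this
    linarith

variable {m : ℕ}

/-- The map squaring all coordinates. -/
def sqMap (z : EuclideanSpace ℂ (Fin m)) : EuclideanSpace ℂ (Fin m) :=
  WithLp.toLp 2 fun i => z i ^ 2

/-- The inverse of `sqMap` on the points whose coordinates have positive real part. -/
noncomputable def sqrtMap (w : EuclideanSpace ℂ (Fin m)) : EuclideanSpace ℂ (Fin m) :=
  WithLp.toLp 2 fun i => Complex.sqrt (w i)

/-- The domain on which `sqrtMap` is holomorphic. -/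
def slitProduct (m : ℕ) : Set (EuclideanSpace ℂ (Fin m)) := {w | ∀ i, w i ∈ Complex.slitPlane}

lemma differentiable_coord (i : Fin m) :
    Differentiable ℂ fun z : EuclideanSpace ℂ (Fin m) => z i :=
  (EuclideanSpace.proj i : EuclideanSpace ℂ (Fin m) →L[ℂ] ℂ).differentiable

lemma differentiable_sqMap : Differentiable ℂ (sqMap : EuclideanSpace ℂ (Fin m) → _) :=
  differentiable_euclidean.2 fun i => (differentiable_coord i).pow 2

lemma differentiableOn_sqrtMap : DifferentiableOn ℂ sqrtMap (slitProduct m) :=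
  differentiableOn_euclidean.2 fun i => Complex.differentiableOn_sqrt.comp
    (differentiable_coord i).differentiableOn fun _ hw => hw i

lemma sqMap_sqrtMap (w : EuclideanSpace ℂ (Fin m)) : sqMap (sqrtMap w) = w := by
  ext i
  exact sq_sqrt (w i)

lemma isOpen_setOf_forall_apply_mem {s : Set ℂ} (hs : IsOpen s) :
    IsOpen {z : EuclideanSpace ℂ (Fin m) | ∀ i, z i ∈ s} := by
  simp only [ofPred_forall]
  exact isOpen_iInter_of_finite fun i => hs.preimage (differentiable_coord i).continuous

lemma sqrtMap_sqMap {z : EuclideanSpace ℂ (Fin m)} (hz : ∀ i, 0 < (z i).re) :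
    sqrtMap (sqMap z) = z := by
  ext i
  exact sqrt_sq_of_re_pos (hz i)

lemma sqMap_mem_slitProduct {z : EuclideanSpace ℂ (Fin m)} (hz : ∀ i, 0 < (z i).re) :
    sqMap z ∈ slitProduct m :=
  fun i => sq_mem_slitPlane (hz i)

lemma isBiholomorphicOn_sqMap {s : Set (EuclideanSpace ℂ (Fin m))} (hs : IsOpen s)
    (hpos : ∀ z ∈ s, ∀ i, 0 < (z i).re) : IsBiholomorphicOn sqMap s := by
  have hinv : LeftInvOn sqrtMap sqMap s := fun z hz => sqrtMap_sqMap (hpos z hz)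
  have hslit : MapsTo sqMap s (slitProduct m) := fun z hz =>
    sqMap_mem_slitProduct (hpos z hz)
  refine ⟨hs, differentiable_sqMap.differentiableOn, ?_, sqrtMap,
    differentiableOn_sqrtMap.mono hslit.image_subset, hinv⟩
  have himage : sqMap '' s = slitProduct m ∩ sqrtMap ⁻¹' s := by
    refine Subset.antisymm ?_ fun w hw => ⟨sqrtMap w, hw.2, sqMap_sqrtMap w⟩
    rintro _ ⟨z, hz, rfl⟩
    refine ⟨hslit hz, ?_⟩
    rwa [mem_preimage, hinv hz]
  rw [himage]
  exact differentiableOn_sqrtMap.continuousOn.isOpen_inter_preimage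
    (isOpen_setOf_forall_apply_mem Complex.isOpen_slitPlane) hs

end Square

section Tile

/-- The rectangle `(0, √2) × (-1, 1)`. It has the shape of both halves into which it is cut by its
horizontal symmetry axis, up to the scaling factor `√2`. -/
def rectangle : Set ℂ := Ioo 0 √2 ×ℂ Ioo (-1) 1

/-- The similarity of ratio `√2` taking `rectangle` to `(-√2, √2) × (-1, 1)`, which consists of
`rectangle`, of its negative and of a segment. -/
noncomputable def expand (z : ℂ) : ℂ := Complex.I * (√2 * z - 1)

lemma expand_re (z : ℂ) : (expand z).re = -(√2 * z.im) := by
  simp [expand]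

lemma expand_im (z : ℂ) : (expand z).im = √2 * z.re - 1 := by
  simp [expand]

lemma norm_expand_sub (z w : ℂ) : ‖expand z - expand w‖ = √2 * ‖z - w‖ := by
  rw [expand, expand, ← mul_sub, sub_sub_sub_cancel_right, ← mul_sub, norm_mul, norm_mul,
    Complex.norm_I, one_mul, Complex.norm_of_nonneg (by positivity)]

lemma differentiable_expand : Differentiable ℂ expand :=
  ((differentiable_id.const_mul _).sub_const _).const_mul _

lemma mem_rectangle {z : ℂ} : z ∈ rectangle ↔ (0 < z.re ∧ z.re < √2) ∧ -1 < z.im ∧ z.im < 1 :=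
  Iff.rfl

lemma mem_closure_rectangle {z : ℂ} :
    z ∈ closure rectangle ↔ (0 ≤ z.re ∧ z.re ≤ √2) ∧ -1 ≤ z.im ∧ z.im ≤ 1 := by
  rw [rectangle, Complex.closure_reProdIm, closure_Ioo (by positivity), closure_Ioo (by norm_num)]
  rfl

lemma mem_rectangle_of_smul_expand_mem {s : ℤˣ} {z : ℂ} (h : s • expand z ∈ rectangle) :
    z ∈ rectangle := by
  have h2 : √2 * √2 = 2 := Real.mul_self_sqrt zero_le_two
  rcases Int.units_eq_one_or s with rfl | rfl <;>
  · simp only [one_smul, Units.neg_smul, mem_rectangle, Complex.neg_re, Complex.neg_im, expand_re,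
      expand_im] at h ⊢
    obtain ⟨⟨h₁, h₃⟩, h₄, h₅⟩ := h
    refine ⟨⟨?_, ?_⟩, ?_, ?_⟩ <;> nlinarith [Real.sqrt_nonneg 2]

lemma exists_smul_expand_mem_closure {z : ℂ} (hz : z ∈ rectangle) :
    ∃ s : ℤˣ, s • expand z ∈ closure rectangle := by
  obtain ⟨⟨h₁, h₂⟩, h₃, h₄⟩ := mem_rectangle.1 hz
  have h2 : √2 * √2 = 2 := Real.mul_self_sqrt zero_le_two
  simp only [mem_closure_rectangle]
  rcases le_total 0 z.im with h | h
  · refine ⟨-1, ?_⟩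
    simp only [one_smul, Units.neg_smul, Complex.neg_re, Complex.neg_im, expand_re, expand_im]
    refine ⟨⟨?_, ?_⟩, ?_, ?_⟩ <;> nlinarith [Real.sqrt_nonneg 2]
  · refine ⟨1, ?_⟩
    simp only [one_smul, expand_re, expand_im]
    refine ⟨⟨?_, ?_⟩, ?_, ?_⟩ <;> nlinarith [Real.sqrt_nonneg 2]

/-- The polydomain of the points all of whose coordinates lie in `rectangle`. -/
def tile (m : ℕ) : Set (EuclideanSpace ℂ (Fin m)) := {z | ∀ i, z i ∈ rectangle}

variable {m : ℕ}

lemma tile_eq_preimage_pi :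
    tile m = PiLp.homeomorph 2 (fun _ : Fin m => ℂ) ⁻¹' univ.pi fun _ => rectangle := by
  ext z
  simp only [mem_preimage, mem_univ_pi]
  rfl

lemma re_pos_of_mem_tile {z : EuclideanSpace ℂ (Fin m)} (hz : z ∈ tile m) (i : Fin m) :
    0 < (z i).re :=
  (hz i).1.1

lemma isOpen_tile : IsOpen (tile m) :=
  isOpen_setOf_forall_apply_mem (isOpen_Ioo.reProdIm isOpen_Ioo)

lemma convex_tile : Convex ℝ (tile m) := by
  have hrect : Convex ℝ rectangle := ((convex_Ioo _ _).linear_preimage Complex.reLm).inter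
    ((convex_Ioo _ _).linear_preimage Complex.imLm)
  simp only [tile, ofPred_forall]
  exact convex_iInter fun i => hrect.linear_preimage
    ((EuclideanSpace.proj (𝕜 := ℂ) i).toLinearMap.restrictScalars ℝ)

lemma tile_nonempty : (tile m).Nonempty :=
  ⟨WithLp.toLp 2 fun _ => 1, fun i => by
    have : 1 < √2 := Real.lt_sqrt_of_sq_lt (by norm_num)
    simpa [mem_rectangle] using this⟩

lemma mem_closure_tile {z : EuclideanSpace ℂ (Fin m)} :
    z ∈ closure (tile m) ↔ ∀ i, z i ∈ closure rectangle := by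
  rw [tile_eq_preimage_pi, ← Homeomorph.preimage_closure, closure_pi_set, mem_preimage, mem_univ_pi]
  rfl

lemma isBounded_tile : Bornology.IsBounded (tile m) := by
  have hrect : Bornology.IsBounded rectangle := (isBounded_Ioo _ _).reProdIm (isBounded_Ioo _ _)
  rw [tile_eq_preimage_pi]
  exact (PiLp.antilipschitzWith_ofLp 2 _).isBounded_preimage (.pi fun _ => hrect)

/-- The map `expand` in every coordinate, with the signs `s`. -/
noncomputable def branch (s : Fin m → ℤˣ) (z : EuclideanSpace ℂ (Fin m)) :
    EuclideanSpace ℂ (Fin m) :=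
  WithLp.toLp 2 fun i => s i • expand (z i)

/-- The piecewise affine map which agrees with `branch s` wherever that map takes values in
`tile m`. -/
noncomputable def tileMap (z : EuclideanSpace ℂ (Fin m)) : EuclideanSpace ℂ (Fin m) :=
  sqrtMap (sqMap (WithLp.toLp 2 fun i => expand (z i)))

lemma tileMap_eq_branch {s : Fin m → ℤˣ} {z : EuclideanSpace ℂ (Fin m)}
    (h : branch s z ∈ tile m) : tileMap z = branch s z := by
  ext i
  have hsq : expand (z i) ^ 2 = (s i • expand (z i)) ^ 2 := by
    rcases Int.units_eq_one_or (s i) with hs | hs <;> simp [hs]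
  change Complex.sqrt (expand (z i) ^ 2) = s i • expand (z i)
  rw [hsq]
  exact sqrt_sq_of_re_pos (h i).1.1

lemma dist_branch (s : Fin m → ℤˣ) (x y : EuclideanSpace ℂ (Fin m)) :
    dist (branch s x) (branch s y) = √2 * dist x y := by
  have hcoord (i : Fin m) :
      dist (s i • expand (x i)) (s i • expand (y i)) = √2 * dist (x i) (y i) := by
    rw [dist_eq_norm, ← smul_sub, norm_units_zsmul, norm_expand_sub, dist_eq_norm]
  simp only [EuclideanSpace.dist_eq, branch, hcoord, mul_pow]
  rw [← Finset.mul_sum, Real.sqrt_mul (by positivity), Real.sqrt_sq (by positivity)]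

lemma continuous_branch (s : Fin m → ℤˣ) : Continuous (branch s) :=
  (LipschitzWith.of_dist_le_mul (K := ⟨√2, by positivity⟩) fun x y =>
    (dist_branch s x y).le).continuous

lemma branch_surjective (s : Fin m → ℤˣ) : Function.Surjective (branch s) := by
  intro w
  refine ⟨WithLp.toLp 2 fun i => (1 - Complex.I * (s i • w i)) / √2, ?_⟩
  ext i
  have h0 : (√2 : ℂ) ≠ 0 := by exact_mod_cast (Real.sqrt_pos.2 zero_lt_two).ne'
  have hexpand : expand ((1 - Complex.I * (s i • w i)) / √2) = s i • w i := by
    rw [expand, mul_div_cancel₀ _ h0]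
    linear_combination -(s i • w i) * Complex.I_mul_I
  change s i • expand ((1 - Complex.I * (s i • w i)) / √2) = w i
  rw [hexpand, smul_smul, Int.units_mul_self, one_smul]

lemma isExpandingOn_tileMap : IsExpandingOn tileMap (tile m) (3 / 4) := by
  intro A hAT hA δ hδ hTA
  refine ⟨⋃ s, branch s ⁻¹' A, ?_, isOpen_iUnion fun s => hA.preimage (continuous_branch s), ?_, ?_⟩
  · exact iUnion_subset fun s z hz i => mem_rectangle_of_smul_expand_mem (hAT hz i)
  · refine mapsTo_iUnion.2 fun s z hz => ?_
    rwa [tileMap_eq_branch (hAT hz)]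
  · intro x hx
    choose s hs using fun i => exists_smul_expand_mem_closure (hx i)
    have hδ' : δ < √2 * (3 / 4 * δ) := by
      have : 4 / 3 < √2 := Real.lt_sqrt_of_sq_lt (by norm_num)
      nlinarith
    have hcl : closure (tile m) ⊆ thickening (√2 * (3 / 4 * δ)) A :=
      (closure_mono hTA).trans ((closure_thickening_subset_cthickening δ A).trans
        (cthickening_subset_thickening' (by positivity) hδ' A))
    obtain ⟨a, ha, hxa⟩ := mem_thickening_iff.1 (hcl (mem_closure_tile.2 hs : branch s x ∈ _))
    obtain ⟨y, rfl⟩ := branch_surjective s a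
    rw [dist_branch, mul_lt_mul_iff_right₀ (by positivity)] at hxa
    exact mem_thickening_iff.2 ⟨y, mem_iUnion.2 ⟨s, ha⟩, hxa⟩

/-- The holomorphic map to which `sqMap` semiconjugates `tileMap`. -/
noncomputable def powerMap (w : EuclideanSpace ℂ (Fin m)) : EuclideanSpace ℂ (Fin m) :=
  sqMap (WithLp.toLp 2 fun i => expand (sqrtMap w i))

lemma differentiableOn_powerMap : DifferentiableOn ℂ powerMap (slitProduct m) :=
  differentiable_sqMap.comp_differentiableOn <| differentiableOn_euclidean.2 fun i =>
    (differentiable_expand.comp (differentiable_coord i)).comp_differentiableOn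
      differentiableOn_sqrtMap

lemma powerMap_sqMap {z : EuclideanSpace ℂ (Fin m)} (hz : z ∈ tile m) :
    powerMap (sqMap z) = sqMap (tileMap z) := by
  rw [powerMap, sqrtMap_sqMap (re_pos_of_mem_tile hz), tileMap, sqMap_sqrtMap]

lemma isBounded_image_sqMap_tile : Bornology.IsBounded (sqMap '' tile m) :=
  (isBounded_tile.isCompact_closure.image differentiable_sqMap.continuous).isBounded.subset
    (image_mono subset_closure)

lemma exists_dense_orbit_sqMap {V : Set (EuclideanSpace ℂ (Fin m))} (hV : IsOpen V)
    (hVT : V ⊆ tile m) (hTV : tile m ⊆ closure V) :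
    ∃ p : ℕ → EuclideanSpace ℂ (Fin m), (∀ n, p n ∈ sqMap '' V) ∧
      (∀ n, powerMap (p n) = p (n + 1)) ∧ sqMap '' tile m ⊆ closure (range p) := by
  obtain ⟨z, hzV, hz⟩ := isExpandingOn_tileMap.exists_dense_orbit (by norm_num) (by norm_num)
    isOpen_tile isBounded_tile tile_nonempty hV hVT hTV
  refine ⟨fun n => sqMap (tileMap^[n] z), fun n => mem_image_of_mem _ (hzV n), fun n => ?_, ?_⟩
  · exact (powerMap_sqMap (hVT (hzV n))).trans
      (congrArg sqMap (Function.iterate_succ_apply' tileMap n z).symm)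
  · calc sqMap '' tile m ⊆ sqMap '' closure (range fun n => tileMap^[n] z) := image_mono hz
      _ ⊆ closure (sqMap '' range fun n => tileMap^[n] z) :=
        image_closure_subset_closure_image differentiable_sqMap.continuous
      _ = closure (range fun n => sqMap (tileMap^[n] z)) := by rw [← range_comp, Function.comp_def]

end Tile

/-- **Theorem 1.2.** There is a bounded domain `U ⊆ ℂ^m`, biholomorphic to the unit ball via
a map `g` (with holomorphic inverse `h`), and a holomorphic map `F : U → ℂ^m` with a dense
orbit `{p_n} ⊆ U`, i.e. `F(p_n) = p_{n+1}` for all `n` and `{p_n}` is dense in `U`. -/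
theorem exists_bounded_domain_biholo_ball_with_dense_orbit (m : ℕ) :
    ∃ (U : Set (EuclideanSpace ℂ (Fin m)))
      (g h F : EuclideanSpace ℂ (Fin m) → EuclideanSpace ℂ (Fin m))
      (p : ℕ → EuclideanSpace ℂ (Fin m)),
      IsOpen U ∧ IsConnected U ∧ Bornology.IsBounded U ∧
      -- `g` is a biholomorphism from the unit ball onto `U`, with inverse `h`
      DifferentiableOn ℂ g (ball 0 1) ∧ g '' (ball 0 1) = U ∧
      DifferentiableOn ℂ h U ∧
      (∀ z ∈ ball (0 : EuclideanSpace ℂ (Fin m)) 1, h (g z) = z) ∧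
      (∀ w ∈ U, g (h w) = w) ∧
      -- `F` is holomorphic on `U` and has a dense orbit `{p_n} ⊆ U`
      DifferentiableOn ℂ F U ∧
      (∀ n, p n ∈ U) ∧ (∀ n, F (p n) = p (n + 1)) ∧
      U ⊆ closure (Set.range p) := by
  obtain ⟨f, hf, hfT, hTf⟩ : HasDenseBall (tile m) :=
    hasDenseBall_of_convex isOpen_tile convex_tile tile_nonempty
  have hpos : ∀ z ∈ tile m, ∀ i, 0 < (z i).re := fun z => re_pos_of_mem_tile
  have hg : IsBiholomorphicOn (sqMap ∘ f) (ball 0 1) :=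
    (isBiholomorphicOn_sqMap isOpen_tile hpos).comp hf (mapsTo_iff_image_subset.2 hfT)
  have hgT : sqMap ∘ f '' ball 0 1 ⊆ sqMap '' tile m := by
    rw [image_comp]
    exact image_mono hfT
  obtain ⟨h, hhd, hh⟩ := hg.exists_leftInvOn
  obtain ⟨p, hpU, hFp, hp⟩ := exists_dense_orbit_sqMap hf.isOpen_image hfT hTf
  rw [← image_comp] at hpU
  have hball : IsConnected (ball (0 : EuclideanSpace ℂ (Fin m)) 1) :=
    (convex_ball _ _).isConnected (nonempty_ball.2 one_pos)
  exact ⟨sqMap ∘ f '' ball 0 1, sqMap ∘ f, h, powerMap, p, hg.isOpen_image,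
    hball.image _ hg.differentiableOn.continuousOn, isBounded_image_sqMap_tile.subset hgT,
    hg.differentiableOn, rfl, hhd, hh, hh.rightInvOn_image,
    differentiableOn_powerMap.mono (hgT.trans (image_subset_iff.2 fun z hz =>
      sqMap_mem_slitProduct (hpos z hz))), hpU, hFp, hgT.trans hp⟩
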